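/- arXiv:2602.01110 — 2 statements merged into one kernel-verified Lean document; each statement's English description precedes it below -/
import Mathlib

section
/- Let Γ be a generalised hexagon of finite order (s,t) with s > 1 and t > 1, and let S be a set of s+1 points of Γ such that no point of Γ is opposite every member of S. Suppose the points of S are pairwise opposite. Then s ≥ t, and S is a regular distance-3 trace: there exist opposite lines L and M of Γ with S = [L,M]_3, and this trace is regular. -/
/-- An incidence structure of points and lines, each line being a set of points. -/
structure GenHexagon where
  Point : Type
  Line : Type
  pts : Line → Set Point

namespace GenHexagon

variable (Γ : GenHexagon)

/-- Adjacency of the bipartite incidence graph on the disjoint union of points and lines: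
a point is adjacent to a line iff the point lies on the line. -/
def incAdj : Γ.Point ⊕ Γ.Line → Γ.Point ⊕ Γ.Line → Prop
  | Sum.inl x, Sum.inr L => x ∈ Γ.pts L
  | Sum.inr L, Sum.inl x => x ∈ Γ.pts L
  | _, _ => False

/-- The bipartite incidence graph. -/
def incGraph : SimpleGraph (Γ.Point ⊕ Γ.Line) where
  Adj := Γ.incAdj
  symm := ⟨by rintro (x | L) (y | M) h <;> simp_all [incAdj]⟩
  loopless := ⟨by rintro (x | L) h <;> simp_all [incAdj]⟩

/-- `Γ` is a generalised hexagon: its incidence graph has diameter `6` and girth `12`. -/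
def IsGenHexagon : Prop :=
  Γ.incGraph.ediam = 6 ∧ Γ.incGraph.egirth = 12

/-- Two points are collinear if they are distinct and some line contains both. -/
def Collinear (x y : Γ.Point) : Prop :=
  x ≠ y ∧ ∃ L, x ∈ Γ.pts L ∧ y ∈ Γ.pts L

/-- Two points are special if they are distinct, non-collinear, and collinear
to a common point. -/
def Special (x y : Γ.Point) : Prop :=
  x ≠ y ∧ ¬ Γ.Collinear x y ∧ ∃ z, Γ.Collinear x z ∧ Γ.Collinear y z

/-- Two points are opposite if they are distinct, non-collinear and non-special. -/
def Opposite (x y : Γ.Point) : Prop :=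
  x ≠ y ∧ ¬ Γ.Collinear x y ∧ ¬ Γ.Special x y

/-- `Γ` has order `(s, t)`: every line contains exactly `s + 1` points and every
point lies on exactly `t + 1` lines. -/
def HasOrder (s t : ℕ) : Prop :=
  (∀ L, (Γ.pts L).encard = s + 1) ∧ (∀ x, {L | x ∈ Γ.pts L}.encard = t + 1)

/-- `Γ` is thick: every line contains at least `3` points and every point lies on
at least `3` lines. -/
def Thick : Prop :=
  (∀ L, 3 ≤ (Γ.pts L).encard) ∧ (∀ x, 3 ≤ {L | x ∈ Γ.pts L}.encard)

/-- A point is close to a line if it is collinear to exactly one point of that line. -/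
def CloseTo (x : Γ.Point) (L : Γ.Line) : Prop :=
  ∃! y, y ∈ Γ.pts L ∧ Γ.Collinear x y

/-- Two lines are opposite if they are disjoint and no point of one is collinear to
a point of the other. -/
def OppLines (L M : Γ.Line) : Prop :=
  (∀ x ∈ Γ.pts L, x ∉ Γ.pts M) ∧
  (∀ x ∈ Γ.pts L, ∀ y ∈ Γ.pts M, ¬ Γ.Collinear x y)

/-- The distance-3 trace `[L,M]₃` of two (opposite) lines: the set of points close to
both `L` and `M`. -/
def trace3 (L M : Γ.Line) : Set Γ.Point :=
  {x | Γ.CloseTo x L ∧ Γ.CloseTo x M}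

/-- The distance-3 trace `[L,M]₃` is regular if `[N,M]₃ = [L,M]₃` for every line `N`
opposite `M` such that `[N,M]₃` and `[L,M]₃` share at least two points. -/
def RegularTrace3 (L M : Γ.Line) : Prop :=
  ∀ N, Γ.OppLines N M → (Γ.trace3 N M ∩ Γ.trace3 L M).Nontrivial →
    Γ.trace3 N M = Γ.trace3 L M

/-- A hyperbolic line: a set `H` of pairwise special points, all collinear to a common
point `p`, such that for every point `q` opposite `p` to which at least two points of `H`
are special, the set of points special to `q` and collinear to `p` equals `H`. -/
def IsHyperbolicLine (H : Set Γ.Point) : Prop :=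
  (∀ x ∈ H, ∀ y ∈ H, x ≠ y → Γ.Special x y) ∧
  ∃ p, (∀ x ∈ H, Γ.Collinear x p) ∧
    ∀ q, Γ.Opposite q p → {x ∈ H | Γ.Special q x}.Nontrivial →
      {x | Γ.Special q x ∧ Γ.Collinear x p} = H

/-- A round-up triple: no point of `Γ` is opposite exactly one of `x₁, x₂, x₃`. -/
def RoundUpTriple (x₁ x₂ x₃ : Γ.Point) : Prop :=
  ∀ y : Γ.Point,
    ¬ ((Γ.Opposite y x₁ ∧ ¬ Γ.Opposite y x₂ ∧ ¬ Γ.Opposite y x₃) ∨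
       (¬ Γ.Opposite y x₁ ∧ Γ.Opposite y x₂ ∧ ¬ Γ.Opposite y x₃) ∨
       (¬ Γ.Opposite y x₁ ∧ ¬ Γ.Opposite y x₂ ∧ Γ.Opposite y x₃))

/-- A geometric line: a set `T` of points such that each point of `Γ` is either opposite
no member of `T`, or non-opposite to exactly one member of `T`. -/
def IsGeometricLine (T : Set Γ.Point) : Prop :=
  ∀ y : Γ.Point, (∀ x ∈ T, ¬ Γ.Opposite y x) ∨ (∃! x, x ∈ T ∧ ¬ Γ.Opposite y x)

end GenHexagon

/-!
A set `S` of pairwise opposite points is studied through the lines *near* its points, meaning at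
distance at most `3` in the incidence graph. Count the non-opposite pairs between `S` and the
points of a line `K`: a point near `K` is non-opposite every point of `K`, any other point is
non-opposite exactly one. As `S` is blocking and has at most `s + 1` points, it follows that a point
of `K` collinear with no member of `S` but non-opposite two of them has a member of `S` near each
of the `t + 1` lines through it; these members are distinct as there are no quadrangles. Feeding
this back into the count shows, since `t > 1`, that a line near two points of `S` is near all of
them and that each of its points is collinear with a member of `S`. Two such lines are opposite
with trace `S`, and a line whose trace shares two points with `S` is again of this kind, whence
regularity. A line near exactly one point of `S` carries a point non-opposite at least `t + 1`
members of `S`, whence `t ≤ s`.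
-/

section Graph

variable {V : Type*} {G : SimpleGraph V} {u v a b : V}

theorem edist_le_natCast_iff_exists_walk {n : ℕ} :
    G.edist u v ≤ n ↔ ∃ p : G.Walk u v, p.length ≤ n := by
  refine ⟨fun h => ?_, fun ⟨p, hp⟩ => p.edist_le.trans (Nat.cast_le.2 hp)⟩
  obtain ⟨p, hp⟩ := SimpleGraph.exists_walk_of_edist_ne_top (h.trans_lt (ENat.natCast_lt_top n)).ne
  exact ⟨p, Nat.cast_le.1 (hp.trans_le h)⟩

theorem edist_le_add_one_iff_exists_adj {n : ℕ} :
    G.edist u v ≤ n + 1 ↔ u = v ∨ ∃ w, G.Adj w v ∧ G.edist u w ≤ n := by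
  constructor
  · intro h
    obtain ⟨p, hp⟩ := edist_le_natCast_iff_exists_walk.1 (Nat.cast_succ (R := ℕ∞) n ▸ h)
    by_cases hnil : p.Nil
    · exact .inl hnil.eq
    · refine .inr ⟨p.penultimate, p.adj_penultimate hnil,
        edist_le_natCast_iff_exists_walk.2 ⟨p.dropLast, ?_⟩⟩
      have := SimpleGraph.Walk.length_dropLast_add_one hnil
      lia
  · rintro (rfl | ⟨w, hwv, huw⟩)
    · simp
    · exact SimpleGraph.edist_triangle.trans
        (add_le_add huw (SimpleGraph.edist_eq_one_iff_adj.2 hwv).le)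

theorem exists_isPath_penultimate_eq {k : ℕ} (hav : G.Adj a v) (hua : G.edist u a ≤ k + 1)
    (huv : k < G.edist u v) :
    ∃ p : G.Walk u v, p.IsPath ∧ p.length ≤ k + 2 ∧ p.penultimate = a := by
  classical
  obtain ⟨p, hp⟩ := edist_le_natCast_iff_exists_walk.1 (Nat.cast_succ (R := ℕ∞) k ▸ hua)
  have hlen : p.bypass.length ≤ k + 1 := p.length_bypass_le_length.trans hp
  have hv : v ∉ p.bypass.support := fun hmem => by
    have hlt := SimpleGraph.Walk.length_takeUntil_lt_length hmem hav.ne'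
    exact huv.not_ge (edist_le_natCast_iff_exists_walk.2 ⟨p.bypass.takeUntil v hmem, by lia⟩)
  exact ⟨p.bypass.concat hav, p.bypass_isPath.concat hv hav,
    by simpa using hlen, SimpleGraph.Walk.penultimate_concat _ _⟩

/-- Below half the girth, shortest paths have a unique last edge. -/
theorem eq_of_adj_of_edist_le {k : ℕ} (hgirth : ((2 * k + 4 : ℕ) : ℕ∞) < G.egirth)
    (hav : G.Adj a v) (hbv : G.Adj b v) (hua : G.edist u a ≤ k + 1) (hub : G.edist u b ≤ k + 1)
    (huv : k < G.edist u v) : a = b := by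
  obtain ⟨p, hp, hpk, rfl⟩ := exists_isPath_penultimate_eq hav hua huv
  obtain ⟨q, hq, hqk, rfl⟩ := exists_isPath_penultimate_eq hbv hub huv
  by_contra hne
  obtain ⟨w, -, -, c, hc, hcl⟩ :=
    hp.exists_isCycle_length_le_add_of_ne hq fun hpq => hne (hpq ▸ rfl)
  have hle : G.egirth ≤ (2 * k + 4 : ℕ) :=
    (SimpleGraph.egirth_le_length hc).trans (Nat.cast_le.2 (by lia))
  exact hgirth.not_ge hle

end Graph

namespace GenHexagon

variable {Γ : GenHexagon} {x y z p q : Γ.Point} {K L M : Γ.Line} {s t : ℕ}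

/-- Two points are near if they are equal or collinear, i.e. at distance at most `2` in the
incidence graph. -/
def Near (Γ : GenHexagon) (x y : Γ.Point) : Prop :=
  x = y ∨ Γ.Collinear x y

/-- A point is near a line if it is near some point of it, i.e. if it is at distance at most `3`
from it in the incidence graph. -/
def NearLine (Γ : GenHexagon) (x : Γ.Point) (L : Γ.Line) : Prop :=
  ∃ p ∈ Γ.pts L, Γ.Near x p

theorem Near.symm (h : Γ.Near x y) : Γ.Near y x :=
  h.imp Eq.symm fun ⟨hne, L, hx, hy⟩ => ⟨hne.symm, L, hy, hx⟩

theorem near_of_mem (hx : x ∈ Γ.pts L) (hy : y ∈ Γ.pts L) : Γ.Near x y :=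
  or_iff_not_imp_left.2 fun h => ⟨h, L, hx, hy⟩

theorem near_iff_eq_or_exists_mem : Γ.Near x y ↔ x = y ∨ ∃ L, y ∈ Γ.pts L ∧ x ∈ Γ.pts L :=
  ⟨Or.imp_right fun ⟨_, L, hx, hy⟩ => ⟨L, hy, hx⟩,
    fun h => h.elim .inl fun ⟨_, hy, hx⟩ => near_of_mem hx hy⟩

theorem not_opposite_iff_exists_near : ¬ Γ.Opposite x y ↔ ∃ z, Γ.Near x z ∧ Γ.Near z y := by
  constructor
  · intro h
    by_cases hxy : Γ.Near x y
    · exact ⟨y, hxy, .inl rfl⟩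
    · obtain ⟨hne, hcol⟩ := not_or.1 hxy
      obtain ⟨-, -, z, hxz, hyz⟩ : Γ.Special x y := by
        by_contra hsp
        exact h ⟨hne, hcol, hsp⟩
      exact ⟨z, .inr hxz, Near.symm (.inr hyz)⟩
  · rintro ⟨z, rfl | hxz, hzy⟩ ⟨hne, hcol, hsp⟩
    · exact hzy.elim hne hcol
    · rcases hzy.symm with rfl | hyz
      · exact hcol hxz
      · exact hsp ⟨hne, hcol, z, hxz, hyz⟩

theorem not_opposite_iff_eq_or_exists_nearLine :
    ¬ Γ.Opposite x y ↔ x = y ∨ ∃ L, y ∈ Γ.pts L ∧ Γ.NearLine x L := by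
  rw [not_opposite_iff_exists_near]
  constructor
  · rintro ⟨z, hxz, hzy⟩
    rcases near_iff_eq_or_exists_mem.1 hzy with rfl | ⟨L, hyL, hzL⟩
    · exact (near_iff_eq_or_exists_mem.1 hxz).imp_right
        fun ⟨L, hzL, hxL⟩ => ⟨L, hzL, x, hxL, .inl rfl⟩
    · exact .inr ⟨L, hyL, z, hzL, hxz⟩
  · rintro (rfl | ⟨L, hyL, z, hzL, hxz⟩)
    · exact ⟨x, .inl rfl, .inl rfl⟩
    · exact ⟨z, hxz, near_of_mem hzL hyL⟩

theorem Opposite.symm (h : Γ.Opposite x y) : Γ.Opposite y x := by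
  by_contra hyx
  obtain ⟨z, hyz, hzx⟩ := not_opposite_iff_exists_near.1 hyx
  exact not_opposite_iff_exists_near.2 ⟨z, hzx.symm, hyz.symm⟩ h

theorem NearLine.not_opposite (h : Γ.NearLine x L) (hp : p ∈ Γ.pts L) : ¬ Γ.Opposite x p :=
  not_opposite_iff_eq_or_exists_nearLine.2 (.inr ⟨L, hp, h⟩)

section Distance

theorem edist_inl_inl_le_add_one_iff {n : ℕ} :
    Γ.incGraph.edist (.inl x) (.inl y) ≤ n + 1 ↔
      x = y ∨ ∃ L, y ∈ Γ.pts L ∧ Γ.incGraph.edist (.inl x) (.inr L) ≤ n := by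
  simp [edist_le_add_one_iff_exists_adj, incGraph, incAdj]

theorem edist_inl_inr_le_add_one_iff {n : ℕ} :
    Γ.incGraph.edist (.inl x) (.inr L) ≤ n + 1 ↔
      ∃ y ∈ Γ.pts L, Γ.incGraph.edist (.inl x) (.inl y) ≤ n := by
  simp [edist_le_add_one_iff_exists_adj, incGraph, incAdj]

theorem mem_iff_edist_le_one : x ∈ Γ.pts L ↔ Γ.incGraph.edist (.inl x) (.inr L) ≤ 1 := by
  simpa using (edist_inl_inr_le_add_one_iff (x := x) (L := L) (n := 0)).symm

theorem near_iff_edist_le_two : Γ.Near x y ↔ Γ.incGraph.edist (.inl x) (.inl y) ≤ 2 :=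
  near_iff_eq_or_exists_mem.trans <|
    (or_congr_right <| exists_congr fun _ => and_congr_right' mem_iff_edist_le_one).trans
      (edist_inl_inl_le_add_one_iff (n := 1)).symm

theorem nearLine_iff_edist_le_three :
    Γ.NearLine x L ↔ Γ.incGraph.edist (.inl x) (.inr L) ≤ 3 :=
  (exists_congr fun _ => and_congr_right' near_iff_edist_le_two).trans
    (edist_inl_inr_le_add_one_iff (n := 2)).symm

theorem not_opposite_iff_edist_le_four :
    ¬ Γ.Opposite x y ↔ Γ.incGraph.edist (.inl x) (.inl y) ≤ 4 :=
  not_opposite_iff_eq_or_exists_nearLine.trans <|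
    (or_congr_right <| exists_congr fun _ => and_congr_right' nearLine_iff_edist_le_three).trans
      (edist_inl_inl_le_add_one_iff (n := 3)).symm

theorem edist_inl_inr_le_of_even {n : ℕ}
    (h : Γ.incGraph.edist (.inl x) (.inr L) ≤ (2 * n + 2 : ℕ)) :
    Γ.incGraph.edist (.inl x) (.inr L) ≤ (2 * n + 1 : ℕ) := by
  obtain ⟨w, hw⟩ := edist_le_natCast_iff_exists_walk.1 h
  let sideColoring : Γ.incGraph.Coloring Bool := .mk Sum.isLeft fun {a b} hab => by
    rcases a with a | a <;> rcases b with b | b <;> simp_all [incGraph, incAdj]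
  have hodd : Odd w.length := (sideColoring.odd_length_iff_not_congr w).2
    (by simp [sideColoring, SimpleGraph.Coloring.mk])
  exact edist_le_natCast_iff_exists_walk.2 ⟨w, by grind⟩

end Distance

namespace IsGenHexagon

theorem exists_not_opposite (hΓ : Γ.IsGenHexagon) (x : Γ.Point) (K : Γ.Line) :
    ∃ p ∈ Γ.pts K, ¬ Γ.Opposite x p := by
  have hdiam : Γ.incGraph.edist (.inl x) (.inr K) ≤ 6 := hΓ.1 ▸ SimpleGraph.edist_le_ediam
  simpa only [not_opposite_iff_edist_le_four, Nat.cast_ofNat] using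
    edist_inl_inr_le_add_one_iff (n := 4).1 (edist_inl_inr_le_of_even (n := 2) hdiam)

theorem line_unique (hΓ : Γ.IsGenHexagon) (hxy : x ≠ y) (hxL : x ∈ Γ.pts L) (hyL : y ∈ Γ.pts L)
    (hxM : x ∈ Γ.pts M) (hyM : y ∈ Γ.pts M) : L = M := by
  have hdist : 0 < Γ.incGraph.edist (.inl x) (.inl y) :=
    SimpleGraph.edist_pos_of_ne (Sum.inl_injective.ne hxy)
  refine Sum.inr_injective (eq_of_adj_of_edist_le (k := 0) ?_ hyL hyM ?_ ?_ hdist)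
  · rw [hΓ.2]; norm_num
  all_goals simpa [← mem_iff_edist_le_one]

/-- There are no triangles. -/
theorem foot_unique (hΓ : Γ.IsGenHexagon) (hx : x ∉ Γ.pts K) (hp : p ∈ Γ.pts K)
    (hq : q ∈ Γ.pts K) (hxp : Γ.Near x p) (hxq : Γ.Near x q) : p = q := by
  rw [mem_iff_edist_le_one, not_le] at hx
  rw [near_iff_edist_le_two] at hxp hxq
  refine Sum.inl_injective (eq_of_adj_of_edist_le (k := 1) ?_ hp hq hxp hxq hx)
  rw [hΓ.2]; norm_num

/-- There are no quadrangles. -/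
theorem nearLine_unique (hΓ : Γ.IsGenHexagon) (hxp : ¬ Γ.Near x p) (hpK : p ∈ Γ.pts K)
    (hpM : p ∈ Γ.pts M) (hK : Γ.NearLine x K) (hM : Γ.NearLine x M) : K = M := by
  rw [near_iff_edist_le_two, not_le] at hxp
  rw [nearLine_iff_edist_le_three] at hK hM
  refine Sum.inr_injective (eq_of_adj_of_edist_le (k := 2) ?_ hpK hpM hK hM hxp)
  rw [hΓ.2]; norm_num

/-- There are no pentagons. -/
theorem proj_unique (hΓ : Γ.IsGenHexagon) (hx : ¬ Γ.NearLine x K) (hp : p ∈ Γ.pts K)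
    (hq : q ∈ Γ.pts K) (hxp : ¬ Γ.Opposite x p) (hxq : ¬ Γ.Opposite x q) : p = q := by
  rw [nearLine_iff_edist_le_three, not_le] at hx
  rw [not_opposite_iff_edist_le_four] at hxp hxq
  refine Sum.inl_injective (eq_of_adj_of_edist_le (k := 3) ?_ hp hq hxp hxq hx)
  rw [hΓ.2]; norm_num

end IsGenHexagon

namespace HasOrder

/-- The points of a line of a structure of order `(s, t)`, as a finite set. -/
noncomputable def ptsFinset (hord : Γ.HasOrder s t) (K : Γ.Line) : Finset Γ.Point :=
  (Set.finite_of_encard_eq_coe (k := s + 1) (hord.1 K)).toFinset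

/-- The lines through a point of a structure of order `(s, t)`, as a finite set. -/
noncomputable def linesFinset (hord : Γ.HasOrder s t) (p : Γ.Point) : Finset Γ.Line :=
  (Set.finite_of_encard_eq_coe (k := t + 1) (hord.2 p)).toFinset

@[simp]
theorem mem_ptsFinset (hord : Γ.HasOrder s t) : p ∈ hord.ptsFinset K ↔ p ∈ Γ.pts K :=
  Set.Finite.mem_toFinset _

@[simp]
theorem mem_linesFinset (hord : Γ.HasOrder s t) : K ∈ hord.linesFinset p ↔ p ∈ Γ.pts K :=
  Set.Finite.mem_toFinset _

@[simp]
theorem card_ptsFinset (hord : Γ.HasOrder s t) (K : Γ.Line) :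
    (hord.ptsFinset K).card = s + 1 :=
  Nat.cast_injective (R := ℕ∞) <|
    (Set.Finite.encard_eq_coe_toFinset_card _).symm.trans (hord.1 K)

@[simp]
theorem card_linesFinset (hord : Γ.HasOrder s t) (p : Γ.Point) :
    (hord.linesFinset p).card = t + 1 :=
  Nat.cast_injective (R := ℕ∞) <|
    (Set.Finite.encard_eq_coe_toFinset_card _).symm.trans (hord.2 p)

theorem exists_lines_ne (hord : Γ.HasOrder s t) (ht : 0 < t) (p : Γ.Point) :
    ∃ K L, K ≠ L ∧ p ∈ Γ.pts K ∧ p ∈ Γ.pts L := by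
  obtain ⟨K, hK, L, hL, hKL⟩ := Finset.one_lt_card.1
    (show 1 < (hord.linesFinset p).card by rw [hord.card_linesFinset]; lia)
  exact ⟨K, L, hKL, hord.mem_linesFinset.1 hK, hord.mem_linesFinset.1 hL⟩

end HasOrder

/-- A set of points is blocking if no point is opposite all of its members. -/
def IsBlocking (S : Set Γ.Point) : Prop :=
  ∀ p, ∃ x ∈ S, ¬ Γ.Opposite x p

/-- A line is a transversal of a set `S` of points if all points of `S` are near it and each of its
points is near a member of `S`. -/
def IsTransversal (S : Set Γ.Point) (K : Γ.Line) : Prop :=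
  (∀ x ∈ S, Γ.NearLine x K) ∧ ∀ p ∈ Γ.pts K, ∃ x ∈ S, Γ.Near x p

/-- A set of points is transversally closed if every line near two of its points is a transversal
of it. -/
def IsTransversallyClosed (S : Set Γ.Point) : Prop :=
  ∀ ⦃x y K⦄, x ∈ S → y ∈ S → x ≠ y → Γ.NearLine x K → Γ.NearLine y K → IsTransversal S K

section PairwiseOpposite

variable {S : Set Γ.Point}

theorem eq_of_near_of_near (hopp : S.Pairwise Γ.Opposite) (hx : x ∈ S) (hy : y ∈ S)
    (hxp : Γ.Near x p) (hyp : Γ.Near y p) : x = y :=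
  hopp.eq hx hy (not_opposite_iff_exists_near.2 ⟨p, hxp, hyp.symm⟩)

theorem notMem_of_nearLine (hopp : S.Pairwise Γ.Opposite) (hx : x ∈ S) (hy : y ∈ S) (hxy : x ≠ y)
    (hxK : Γ.NearLine x K) (hyK : Γ.NearLine y K) (hz : z ∈ S) : z ∉ Γ.pts K := by
  intro hzK
  rcases eq_or_ne x z with rfl | hxz
  · exact hyK.not_opposite hzK (hopp hy hx hxy.symm)
  · exact hxK.not_opposite hzK (hopp hx hz hxz)

theorem exists_not_near (hopp : S.Pairwise Γ.Opposite) (hnt : S.Nontrivial) (p : Γ.Point) :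
    ∃ y ∈ S, ¬ Γ.Near y p := by
  by_contra! hnear
  obtain ⟨x, hx, y, hy, hxy⟩ := hnt
  exact hxy (eq_of_near_of_near hopp hx hy (hnear x hx) (hnear y hy))

namespace IsTransversal

theorem notMem (hK : IsTransversal S K) (hopp : S.Pairwise Γ.Opposite) (hnt : S.Nontrivial)
    (hz : z ∈ S) : z ∉ Γ.pts K :=
  let ⟨_, hx, _, hy, hxy⟩ := hnt
  notMem_of_nearLine hopp hx hy hxy (hK.1 _ hx) (hK.1 _ hy) hz

theorem closeTo (hK : IsTransversal S K) (hΓ : Γ.IsGenHexagon) (hopp : S.Pairwise Γ.Opposite)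
    (hnt : S.Nontrivial) (hx : x ∈ S) : Γ.CloseTo x K := by
  have hxK : x ∉ Γ.pts K := hK.notMem hopp hnt hx
  obtain ⟨p, hp, hxp⟩ := hK.1 x hx
  exact ⟨p, ⟨hp, hxp.resolve_left fun h => hxK (h ▸ hp)⟩,
    fun q hq => hΓ.foot_unique hxK hq.1 hp (.inr hq.2) hxp⟩

theorem disjoint (hL : IsTransversal S L) (hM : IsTransversal S M) (hΓ : Γ.IsGenHexagon)
    (hopp : S.Pairwise Γ.Opposite) (hnt : S.Nontrivial) (hLM : L ≠ M) :
    Disjoint (Γ.pts L) (Γ.pts M) := by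
  refine Set.disjoint_left.2 fun u huL huM => ?_
  obtain ⟨y, hy, hyu⟩ := exists_not_near hopp hnt u
  exact hLM (hΓ.nearLine_unique hyu huL huM (hL.1 y hy) (hM.1 y hy))

theorem oppLines (hL : IsTransversal S L) (hM : IsTransversal S M) (hΓ : Γ.IsGenHexagon)
    (hopp : S.Pairwise Γ.Opposite) (hnt : S.Nontrivial) (hLM : L ≠ M) : Γ.OppLines L M := by
  have hdisj := Set.disjoint_left.1 (hL.disjoint hM hΓ hopp hnt hLM)
  refine ⟨fun u hu => hdisj hu, fun u huL v hvM ⟨huv, J, huJ, hvJ⟩ => ?_⟩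
  obtain ⟨y, hy, hyu⟩ := exists_not_near hopp hnt u
  have hyJ : Γ.NearLine y J := by
    by_contra hyJ
    exact huv (hΓ.proj_unique hyJ huJ hvJ ((hL.1 y hy).not_opposite huL)
      ((hM.1 y hy).not_opposite hvM))
  obtain rfl : J = L := hΓ.nearLine_unique hyu huJ huL hyJ (hL.1 y hy)
  exact hdisj hvJ hvM

end IsTransversal

theorem OppLines.not_nearLine (hLM : Γ.OppLines L M) (hp : p ∈ Γ.pts L) : ¬ Γ.NearLine p M := by
  rintro ⟨w, hw, rfl | hpw⟩
  · exact hLM.1 _ hp hw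
  · exact hLM.2 _ hp _ hw hpw

theorem OppLines.eq_of_near (hLM : Γ.OppLines L M) (hΓ : Γ.IsGenHexagon) (hp : p ∈ Γ.pts L)
    (hxp : Γ.Near x p) (hyp : Γ.Near y p) (hxM : Γ.NearLine x M) (hyM : Γ.NearLine y M) :
    x = y := by
  obtain ⟨v, hvM, hxv⟩ := hxM
  obtain ⟨w, hwM, hyw⟩ := hyM
  have hpM : ¬ Γ.NearLine p M := hLM.not_nearLine hp
  obtain rfl : v = w := hΓ.proj_unique hpM hvM hwM
    (not_opposite_iff_exists_near.2 ⟨x, hxp.symm, hxv⟩)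
    (not_opposite_iff_exists_near.2 ⟨y, hyp.symm, hyw⟩)
  have hvp : ¬ Γ.Near v p := fun hvp => hpM ⟨v, hvM, hvp.symm⟩
  have exists_line : ∀ z, Γ.Near z p → Γ.Near z v → ∃ A, p ∈ Γ.pts A ∧ z ∈ Γ.pts A := by
    intro z hzp hzv
    refine (near_iff_eq_or_exists_mem.1 hzp).resolve_left ?_
    rintro rfl
    exact hvp hzv.symm
  obtain ⟨A, hpA, hxA⟩ := exists_line x hxp hxv
  obtain ⟨B, hpB, hyB⟩ := exists_line y hyp hyw
  obtain rfl : A = B :=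
    hΓ.nearLine_unique hvp hpA hpB ⟨x, hxA, hxv.symm⟩ ⟨y, hyB, hyw.symm⟩
  exact hΓ.foot_unique (fun hvA => hvp (near_of_mem hvA hpA)) hxA hyB hxv.symm hyw.symm

theorem CloseTo.nearLine (h : Γ.CloseTo x L) : Γ.NearLine x L :=
  let ⟨p, ⟨hp, hxp⟩, _⟩ := h
  ⟨p, hp, .inr hxp⟩

theorem trace3_eq_of_isTransversal (hΓ : Γ.IsGenHexagon) (hopp : S.Pairwise Γ.Opposite)
    (hnt : S.Nontrivial) (hLM : Γ.OppLines L M) (hL : IsTransversal S L)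
    (hM : IsTransversal S M) : Γ.trace3 L M = S := by
  refine Set.Subset.antisymm ?_
    fun x hx => ⟨hL.closeTo hΓ hopp hnt hx, hM.closeTo hΓ hopp hnt hx⟩
  rintro z ⟨hzL, hzM⟩
  obtain ⟨u, huL, hzu⟩ := hzL.nearLine
  obtain ⟨x, hx, hxu⟩ := hL.2 u huL
  exact hLM.eq_of_near hΓ huL hzu hxu hzM.nearLine (hM.1 x hx) ▸ hx

namespace IsTransversallyClosed

theorem exists_isTransversal (hS : IsTransversallyClosed S) (hΓ : Γ.IsGenHexagon)
    (hopp : S.Pairwise Γ.Opposite) (hx : x ∈ S) (hy : y ∈ S) (hyx : y ≠ x)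
    (hxK : x ∈ Γ.pts K) :
    ∃ p L, p ∈ Γ.pts K ∧ p ∈ Γ.pts L ∧ p ≠ x ∧ IsTransversal S L := by
  obtain ⟨p, hpK, hyp⟩ := hΓ.exists_not_opposite y K
  have hpx : p ≠ x := by
    rintro rfl
    exact hyp (hopp hy hx hyx)
  have hxp : Γ.Near x p := near_of_mem hxK hpK
  have hyp' : y ≠ p := by
    rintro rfl
    exact hyx (eq_of_near_of_near hopp hy hx (.inl rfl) hxp)
  obtain ⟨L, hpL, hyL⟩ := (not_opposite_iff_eq_or_exists_nearLine.1 hyp).resolve_left hyp'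
  exact ⟨p, L, hpK, hpL, hpx, hS hx hy hyx.symm ⟨p, hpL, hxp⟩ hyL⟩

theorem exists_isTransversal_ne (hS : IsTransversallyClosed S) (hΓ : Γ.IsGenHexagon)
    (hopp : S.Pairwise Γ.Opposite) (hnt : S.Nontrivial)
    (hlines : ∀ x, ∃ K L, K ≠ L ∧ x ∈ Γ.pts K ∧ x ∈ Γ.pts L) :
    ∃ L M, L ≠ M ∧ IsTransversal S L ∧ IsTransversal S M := by
  obtain ⟨x, hx, y, hy, hxy⟩ := id hnt
  obtain ⟨K, K', hKK', hxK, hxK'⟩ := hlines x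
  obtain ⟨p, L, hpK, hpL, hpx, hL⟩ := hS.exists_isTransversal hΓ hopp hx hy hxy.symm hxK
  obtain ⟨q, M, hqK', hqM, -, hM⟩ := hS.exists_isTransversal hΓ hopp hx hy hxy.symm hxK'
  refine ⟨L, M, ?_, hL, hM⟩
  rintro rfl
  obtain rfl : p = q := hΓ.foot_unique (hL.notMem hopp hnt hx) hpL hqM
    (near_of_mem hxK hpK) (near_of_mem hxK' hqK')
  exact hKK' (hΓ.line_unique hpx hpK hxK hqK' hxK')

theorem regularTrace3 (hS : IsTransversallyClosed S) (hΓ : Γ.IsGenHexagon)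
    (hopp : S.Pairwise Γ.Opposite) (hM : IsTransversal S M) (hLM : Γ.trace3 L M = S) :
    Γ.RegularTrace3 L M := by
  intro N hNM hnt
  rw [hLM] at hnt ⊢
  obtain ⟨x, ⟨hxN, hx⟩, y, ⟨hyN, hy⟩, hxy⟩ := hnt
  exact trace3_eq_of_isTransversal hΓ hopp ⟨x, hx, y, hy, hxy⟩ hNM
    (hS hx hy hxy hxN.1.nearLine hyN.1.nearLine) hM

theorem exists_eq_trace3 (hS : IsTransversallyClosed S) (hΓ : Γ.IsGenHexagon)
    (hopp : S.Pairwise Γ.Opposite) (hnt : S.Nontrivial)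
    (hlines : ∀ x, ∃ K L, K ≠ L ∧ x ∈ Γ.pts K ∧ x ∈ Γ.pts L) :
    ∃ L M, Γ.OppLines L M ∧ S = Γ.trace3 L M ∧ Γ.RegularTrace3 L M := by
  obtain ⟨L, M, hLM, hL, hM⟩ := hS.exists_isTransversal_ne hΓ hopp hnt hlines
  have hLM' : Γ.OppLines L M := hL.oppLines hM hΓ hopp hnt hLM
  have htrace : Γ.trace3 L M = S := trace3_eq_of_isTransversal hΓ hopp hnt hLM' hL hM
  exact ⟨L, M, hLM', htrace.symm, hS.regularTrace3 hΓ hopp hM htrace⟩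

end IsTransversallyClosed

end PairwiseOpposite

section Counting

open Classical in
/-- The members of a finite set of points that are not opposite a given point. -/
noncomputable def nonOppPart (S : Finset Γ.Point) (p : Γ.Point) : Finset Γ.Point :=
  {x ∈ S | ¬ Γ.Opposite x p}

open Classical in
/-- The members of a finite set of points that are near a given line. -/
noncomputable def nearPart (S : Finset Γ.Point) (K : Γ.Line) : Finset Γ.Point :=
  {x ∈ S | Γ.NearLine x K}

open Classical in
/-- The points of a line of a structure of order `(s, t)` that are near no member of a set. -/
noncomputable def HasOrder.farPoints (hord : Γ.HasOrder s t) (S : Finset Γ.Point) (K : Γ.Line) :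
    Finset Γ.Point :=
  {p ∈ hord.ptsFinset K | ∀ x ∈ S, ¬ Γ.Near x p}

variable {S : Finset Γ.Point}

@[simp]
theorem mem_nonOppPart : x ∈ nonOppPart S p ↔ x ∈ S ∧ ¬ Γ.Opposite x p := by
  simp [nonOppPart]

@[simp]
theorem mem_nearPart : x ∈ nearPart S K ↔ x ∈ S ∧ Γ.NearLine x K := by
  simp [nearPart]

@[simp]
theorem HasOrder.mem_farPoints (hord : Γ.HasOrder s t) :
    p ∈ hord.farPoints S K ↔ p ∈ Γ.pts K ∧ ∀ x ∈ S, ¬ Γ.Near x p := by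
  simp [farPoints]

theorem card_nonOppPart_le : (nonOppPart S p).card ≤ S.card :=
  Finset.card_le_card fun _ hx => (mem_nonOppPart.1 hx).1

theorem nearPart_subset_nonOppPart (hp : p ∈ Γ.pts K) : nearPart S K ⊆ nonOppPart S p :=
  fun _ hx =>
    let ⟨hxS, hxK⟩ := mem_nearPart.1 hx
    mem_nonOppPart.2 ⟨hxS, hxK.not_opposite hp⟩

open Classical in
theorem card_filter_not_opposite (hΓ : Γ.IsGenHexagon) (hord : Γ.HasOrder s t) (x : Γ.Point)
    (K : Γ.Line) :
    ({p ∈ hord.ptsFinset K | ¬ Γ.Opposite x p} : Finset Γ.Point).card =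
      (if Γ.NearLine x K then s else 0) + 1 := by
  split_ifs with hxK
  · rw [Finset.filter_true_of_mem fun p hp => hxK.not_opposite (hord.mem_ptsFinset.1 hp),
      hord.card_ptsFinset]
  · obtain ⟨p, hp, hxp⟩ := hΓ.exists_not_opposite x K
    refine Finset.card_eq_one.2 ⟨p, Finset.eq_singleton_iff_unique_mem.2 ⟨by simp [hp, hxp], ?_⟩⟩
    intro q hq
    obtain ⟨hqK, hxq⟩ := Finset.mem_filter.1 hq
    exact hΓ.proj_unique hxK (hord.mem_ptsFinset.1 hqK) hp hxq hxp

theorem sum_card_nonOppPart (hΓ : Γ.IsGenHexagon) (hord : Γ.HasOrder s t)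
    (S : Finset Γ.Point) (K : Γ.Line) :
    ∑ p ∈ hord.ptsFinset K, (nonOppPart S p).card = (nearPart S K).card * s + S.card := by
  classical
  calc ∑ p ∈ hord.ptsFinset K, (nonOppPart S p).card
      = ∑ x ∈ S, ({p ∈ hord.ptsFinset K | ¬ Γ.Opposite x p} : Finset Γ.Point).card :=
        (Finset.sum_card_bipartiteAbove_eq_sum_card_bipartiteBelow
          fun x p => ¬ Γ.Opposite x p).symm
    _ = ∑ x ∈ S, ((if Γ.NearLine x K then s else 0) + 1) :=
        Finset.sum_congr rfl fun x _ => card_filter_not_opposite hΓ hord x K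
    _ = (nearPart S K).card * s + S.card := by
        rw [Finset.sum_add_distrib, ← Finset.sum_filter, Finset.sum_const, smul_eq_mul,
          ← Finset.card_eq_sum_ones, nearPart]

theorem nonempty_nearPart (hΓ : Γ.IsGenHexagon) (hord : Γ.HasOrder s t) (hcard : S.card ≤ s + 1)
    (hblock : IsBlocking (S : Set Γ.Point)) (hp : p ∈ Γ.pts K)
    (htwo : 2 ≤ (nonOppPart S p).card) : (nearPart S K).Nonempty := by
  have hpos : ∀ q, 1 ≤ (nonOppPart S q).card := fun q =>
    let ⟨x, hx, hxq⟩ := hblock q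
    Finset.card_pos.2 ⟨x, mem_nonOppPart.2 ⟨hx, hxq⟩⟩
  by_contra hempty
  have hlt : ∑ _q ∈ hord.ptsFinset K, 1 < ∑ q ∈ hord.ptsFinset K, (nonOppPart S q).card :=
    Finset.sum_lt_sum (fun q _ => hpos q) ⟨p, hord.mem_ptsFinset.2 hp, htwo⟩
  rw [sum_card_nonOppPart hΓ, Finset.not_nonempty_iff_eq_empty.1 hempty, ← Finset.card_eq_sum_ones,
    hord.card_ptsFinset, Finset.card_empty] at hlt
  lia

theorem sum_card_nearPart (hΓ : Γ.IsGenHexagon) (hord : Γ.HasOrder s t)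
    (hfar : ∀ x ∈ S, ¬ Γ.Near x p) :
    ∑ M ∈ hord.linesFinset p, (nearPart S M).card = (nonOppPart S p).card := by
  classical
  have hdisj : (hord.linesFinset p : Set Γ.Line).PairwiseDisjoint (nearPart S) := by
    intro M hM N hN hMN
    refine Finset.disjoint_left.2 fun x hxM hxN => hMN ?_
    rw [mem_nearPart] at hxM hxN
    exact hΓ.nearLine_unique (hfar x hxM.1) (hord.mem_linesFinset.1 hM)
      (hord.mem_linesFinset.1 hN) hxM.2 hxN.2
  rw [← Finset.card_biUnion hdisj]
  congr 1
  ext x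
  simp only [Finset.mem_biUnion, HasOrder.mem_linesFinset, mem_nearPart, mem_nonOppPart,
    not_opposite_iff_eq_or_exists_nearLine]
  constructor
  · rintro ⟨M, hpM, hx, hxM⟩
    exact ⟨hx, .inr ⟨M, hpM, hxM⟩⟩
  · rintro ⟨hx, hxp⟩
    obtain ⟨M, hpM, hxM⟩ := hxp.resolve_left fun h => hfar x hx (.inl h)
    exact ⟨M, hpM, hx, hxM⟩

theorem card_nearPart_add_le (hΓ : Γ.IsGenHexagon) (hord : Γ.HasOrder s t)
    (hcard : S.card ≤ s + 1) (hblock : IsBlocking (S : Set Γ.Point)) (hp : p ∈ Γ.pts K)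
    (hfar : ∀ x ∈ S, ¬ Γ.Near x p) (htwo : 2 ≤ (nonOppPart S p).card) :
    (nearPart S K).card + t ≤ (nonOppPart S p).card := by
  classical
  have hK : K ∈ hord.linesFinset p := hord.mem_linesFinset.2 hp
  have herase : ((hord.linesFinset p).erase K).card = t := by
    rw [Finset.card_erase_of_mem hK, hord.card_linesFinset, Nat.add_sub_cancel]
  calc (nearPart S K).card + t
      ≤ (nearPart S K).card + ∑ M ∈ (hord.linesFinset p).erase K, (nearPart S M).card := by
        gcongr
        refine herase.symm.le.trans ?_
        rw [Finset.card_eq_sum_ones]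
        exact Finset.sum_le_sum fun M hM => Finset.card_pos.2 <|
          nonempty_nearPart hΓ hord hcard hblock
            (hord.mem_linesFinset.1 (Finset.mem_of_mem_erase hM)) htwo
    _ = (nonOppPart S p).card := by
        rw [Finset.add_sum_erase _ (fun M => (nearPart S M).card) hK,
          sum_card_nearPart hΓ hord hfar]

theorem card_nearPart_add_mul_card_farPoints_le (hΓ : Γ.IsGenHexagon) (hord : Γ.HasOrder s t)
    (hcard : S.card ≤ s + 1) (hblock : IsBlocking (S : Set Γ.Point))
    (htwo : 2 ≤ (nearPart S K).card) :
    (nearPart S K).card + t * (hord.farPoints S K).card ≤ S.card := by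
  classical
  have hle : ∀ p ∈ hord.ptsFinset K,
      (nearPart S K).card + (if ∀ x ∈ S, ¬ Γ.Near x p then t else 0) ≤
        (nonOppPart S p).card := by
    intro p hp
    have hpK := hord.mem_ptsFinset.1 hp
    have hk := Finset.card_le_card (nearPart_subset_nonOppPart (S := S) hpK)
    split_ifs with hfar
    · exact card_nearPart_add_le hΓ hord hcard hblock hpK hfar (htwo.trans hk)
    · exact hk
  have hsum := Finset.sum_le_sum hle
  rw [sum_card_nonOppPart hΓ, Finset.sum_add_distrib, Finset.sum_const, ← Finset.sum_filter,
    Finset.sum_const, hord.card_ptsFinset, smul_eq_mul, smul_eq_mul, ← HasOrder.farPoints] at hsum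
  linarith

theorem le_card_nearPart_add_card_farPoints (hΓ : Γ.IsGenHexagon) (hord : Γ.HasOrder s t)
    (hS : ∀ x ∈ S, x ∉ Γ.pts K) : s + 1 ≤ (nearPart S K).card + (hord.farPoints S K).card := by
  classical
  have hsub : hord.farPoints S K ⊆ hord.ptsFinset K := Finset.filter_subset _ _
  have hle : (hord.ptsFinset K \ hord.farPoints S K).card ≤ (nearPart S K).card := by
    refine Finset.card_le_card_of_forall_subsingleton (fun p x => Γ.Near x p) ?_ ?_
    · intro p hp
      have hpK := hord.mem_ptsFinset.1 (Finset.mem_sdiff.1 hp).1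
      have hnear : ∃ x ∈ S, Γ.Near x p := by
        by_contra! hfar
        exact (Finset.mem_sdiff.1 hp).2 (hord.mem_farPoints.2 ⟨hpK, hfar⟩)
      obtain ⟨x, hx, hxp⟩ := hnear
      exact ⟨x, mem_nearPart.2 ⟨hx, p, hpK, hxp⟩, hxp⟩
    · rintro x hx p ⟨hp, hxp⟩ q ⟨hq, hxq⟩
      exact hΓ.foot_unique (hS x (mem_nearPart.1 hx).1)
        (hord.mem_ptsFinset.1 (Finset.mem_sdiff.1 hp).1)
        (hord.mem_ptsFinset.1 (Finset.mem_sdiff.1 hq).1) hxp hxq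
  rw [Finset.card_sdiff_of_subset hsub, hord.card_ptsFinset] at hle
  lia

theorem isTransversallyClosed_of_isBlocking (hΓ : Γ.IsGenHexagon) (hord : Γ.HasOrder s t)
    (ht : 1 < t) (hcard : S.card ≤ s + 1) (hblock : IsBlocking (S : Set Γ.Point))
    (hopp : (S : Set Γ.Point).Pairwise Γ.Opposite) :
    IsTransversallyClosed (S : Set Γ.Point) := by
  intro x y K hx hy hxy hxK hyK
  have htwo : 2 ≤ (nearPart S K).card :=
    Finset.one_lt_card.2 ⟨x, mem_nearPart.2 ⟨hx, hxK⟩, y, mem_nearPart.2 ⟨hy, hyK⟩, hxy⟩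
  have hupper := card_nearPart_add_mul_card_farPoints_le hΓ hord hcard hblock htwo
  have hlower := le_card_nearPart_add_card_farPoints hΓ hord (S := S) (K := K)
    fun z hz => notMem_of_nearLine hopp hx hy hxy hxK hyK hz
  have hfar : (hord.farPoints S K).card = 0 := by nlinarith
  have hnear : nearPart S K = S :=
    Finset.eq_of_subset_of_card_le (fun _ hz => (mem_nearPart.1 hz).1) (by lia)
  refine ⟨fun z hz => (mem_nearPart.1 (hnear.symm ▸ hz : z ∈ nearPart S K)).2, fun p hp => ?_⟩
  by_contra! hp'
  exact Finset.eq_empty_iff_forall_notMem.1 (Finset.card_eq_zero.1 hfar) p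
    (hord.mem_farPoints.2 ⟨hp, hp'⟩)

theorem Opposite.exists_near_opposite (hyx : Γ.Opposite y x) (hΓ : Γ.IsGenHexagon)
    (hord : Γ.HasOrder s t) (hs : 1 < s) (hxK : x ∈ Γ.pts K) :
    ∃ a, a ≠ x ∧ Γ.Near x a ∧ Γ.Opposite y a := by
  classical
  obtain ⟨b, hbK, hyb⟩ := hΓ.exists_not_opposite y K
  obtain ⟨a, haK, ha⟩ := Finset.exists_mem_notMem_of_card_lt_card
    (s := {x, b}) (t := hord.ptsFinset K)
    (Finset.card_le_two.trans_lt (by rw [hord.card_ptsFinset]; lia))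
  simp only [Finset.mem_insert, Finset.mem_singleton, not_or] at ha
  rw [hord.mem_ptsFinset] at haK
  refine ⟨a, ha.1, near_of_mem hxK haK, ?_⟩
  by_contra hya
  exact ha.2 (hΓ.proj_unique (fun hyK => hyK.not_opposite hxK hyx) haK hbK hya hyb)

theorem HasOrder.exists_mem_notMem (hord : Γ.HasOrder s t) (hΓ : Γ.IsGenHexagon) (ht : 0 < t)
    (hpx : p ≠ x) : ∃ N, p ∈ Γ.pts N ∧ x ∉ Γ.pts N := by
  obtain ⟨K, L, hKL, hpK, hpL⟩ := hord.exists_lines_ne ht p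
  by_contra! hmem
  exact hKL (hΓ.line_unique hpx hpK (hmem K hpK) hpL (hmem L hpL))

theorem le_of_isTransversallyClosed (hΓ : Γ.IsGenHexagon) (hord : Γ.HasOrder s t) (hs : 1 < s)
    (ht : 0 < t) (hcard : S.card ≤ s + 1) (hblock : IsBlocking (S : Set Γ.Point))
    (hopp : (S : Set Γ.Point).Pairwise Γ.Opposite) (hnt : (S : Set Γ.Point).Nontrivial)
    (hclosed : IsTransversallyClosed (S : Set Γ.Point)) : t ≤ s := by
  obtain ⟨x, hx, y, hy, hxy⟩ := hnt
  obtain ⟨K, -, -, hxK, -⟩ := hord.exists_lines_ne ht x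
  obtain ⟨a, hax, hxa, hya⟩ := (hopp hy hx hxy.symm).exists_near_opposite hΓ hord hs hxK
  obtain ⟨N, haN, hxN⟩ := hord.exists_mem_notMem hΓ ht hax
  obtain ⟨q, hqN, hyq⟩ := hΓ.exists_not_opposite y N
  have hxN' : Γ.NearLine x N := ⟨a, haN, hxa⟩
  have hfar : ∀ z ∈ S, ¬ Γ.Near z q := by
    intro z hz hzq
    rcases eq_or_ne x z with rfl | hxz
    · obtain rfl : q = a := hΓ.foot_unique hxN hqN haN hzq hxa
      exact hyq hya
    · exact ((hclosed hx hz hxz hxN' ⟨q, hqN, hzq⟩).1 y hy).not_opposite haN hya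
  have htwo : 2 ≤ (nonOppPart S q).card := Finset.one_lt_card.2
    ⟨x, mem_nonOppPart.2 ⟨hx, hxN'.not_opposite hqN⟩, y, mem_nonOppPart.2 ⟨hy, hyq⟩, hxy⟩
  have hone : 0 < (nearPart S N).card := Finset.card_pos.2 ⟨x, mem_nearPart.2 ⟨hx, hxN'⟩⟩
  have hle := card_nearPart_add_le hΓ hord hcard hblock hqN hfar htwo
  have hle' := card_nonOppPart_le (S := S) (p := q)
  lia

end Counting

end GenHexagon

/-- Claim 4 in the proof: if the points of `S` are pairwise opposite, then `s ≥ t` and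
`S` is a regular distance-3 trace. -/
theorem claim4_pairwise_opposite (Γ : GenHexagon) (hΓ : Γ.IsGenHexagon)
    (s t : ℕ) (hs : 1 < s) (ht : 1 < t) (hord : Γ.HasOrder s t)
    (S : Set Γ.Point) (hS : S.encard = s + 1)
    (hblock : ¬ ∃ y : Γ.Point, ∀ x ∈ S, Γ.Opposite y x)
    (hpo : ∀ x ∈ S, ∀ y ∈ S, x ≠ y → Γ.Opposite x y) :
    t ≤ s ∧ ∃ L M, Γ.OppLines L M ∧ S = Γ.trace3 L M ∧ Γ.RegularTrace3 L M := by
  have hfin : S.Finite := Set.finite_of_encard_eq_coe (k := s + 1) hS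
  lift S to Finset Γ.Point using hfin
  have hcard : S.card = s + 1 := by
    exact_mod_cast (Set.encard_coe_eq_coe_finsetCard S).symm.trans hS
  have hblock' : GenHexagon.IsBlocking (S : Set Γ.Point) := by
    intro p
    by_contra! hp
    exact hblock ⟨p, fun x hx => (hp x hx).symm⟩
  have hopp : (S : Set Γ.Point).Pairwise Γ.Opposite := fun x hx y hy => hpo x hx y hy
  have hnt : (S : Set Γ.Point).Nontrivial := Finset.one_lt_card_iff_nontrivial.1 (by lia)
  have hclosed := GenHexagon.isTransversallyClosed_of_isBlocking hΓ hord ht hcard.le hblock' hopp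
  exact ⟨GenHexagon.le_of_isTransversallyClosed hΓ hord hs (by lia) hcard.le hblock' hopp hnt
    hclosed, hclosed.exists_eq_trace3 hΓ hopp hnt (hord.exists_lines_ne (by lia))⟩
end

section
/- Let Γ be a generalised hexagon of finite order (s,t) with s > 1 and t > 1, and let S be a set of s+1 points of Γ such that no point of Γ is opposite every member of S. Suppose the points of S are pairwise special. Then s = t and S is a hyperbolic line of Γ. -/
/-!
If two points of `S` have the same projection to a line `L`, then some point `q` of `L` is the
projection of no point of `S`, as `L` has only `s + 1` points; so all of `S` is as far from `q` as
its distance to `L` allows, while `q` is not opposite all of `S`. Applied to lines through a point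
`a` collinear to two points of `S`, this shows that each line through `a` contains exactly one point
of `S`. If every point of `S` is collinear to `a`, it follows that `s = t`; moreover, for `q`
opposite `a` and special to two points of `S`, a point `w ∉ S` collinear to `a` and special to `q`
cannot exist, since the line joining `q` to the centre `[q, w]` would be at distance `5` from all
of `S`.

Otherwise let `z ∈ S` be non-collinear to `a`. Each line through `z` has a unique point collinear to
`t` further points of `S`, whence `s = (t + 1) * t`. This order is ruled out as in the Feit–Higman
theorem: with `N` the incidence matrix, the eigenvalues `s + t ± √(s t)` of `N Nᵀ` have integral
multiplicities, which forces `s t` to be a square `n ^ 2` with `s ^ 2 + s t + t ^ 2` dividing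
`s t (s ^ 2 - 1) (t ^ 2 - 1) n`.
-/

/-! ### Short paths in graphs of large girth -/

section Graph

open SimpleGraph

variable {V : Type*} {G : SimpleGraph V} {u v w w' : V}

theorem isAcyclic_of_edgeSet_subset_edges_append {H : SimpleGraph V} {u' v' : V} (hHG : H ≤ G)
    {p : G.Walk u v} {q : G.Walk u' v'} (hH : ∀ e ∈ H.edgeSet, e ∈ p.edges ++ q.edges)
    (hpq : ((p.length + q.length : ℕ) : ℕ∞) < G.egirth) : H.IsAcyclic := by
  intro x c hc
  have hcpq : c.length ≤ p.length + q.length := by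
    simpa using (hc.edges_nodup.subperm fun e he => hH e (c.edges_subset_edgeSet he)).length_le
  have hcG := egirth_le_length (hc.mapLe hHG)
  rw [Walk.length_map] at hcG
  exact absurd (hpq.trans_le hcG) (not_lt.2 (by exact_mod_cast hcpq))

theorem eq_of_isPath_of_length_add_length_lt_egirth {p q : G.Walk u v} (hp : p.IsPath)
    (hq : q.IsPath) (hpq : ((p.length + q.length : ℕ) : ℕ∞) < G.egirth) : p = q := by
  let H : SimpleGraph V := fromEdgeSet {e | e ∈ p.edges ++ q.edges}
  have mem_H : ∀ e, e ∈ H.edgeSet ↔ e ∈ p.edges ++ q.edges ∧ ¬ e.IsDiag := fun e => by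
    simp only [H, edgeSet_fromEdgeSet]; rfl
  have hpqG : ∀ e ∈ p.edges ++ q.edges, e ∈ G.edgeSet := fun e he =>
    (List.mem_append.1 he).elim (p.edges_subset_edgeSet ·) (q.edges_subset_edgeSet ·)
  have hpqH : ∀ e ∈ p.edges ++ q.edges, e ∈ H.edgeSet := fun e he =>
    (mem_H e).2 ⟨he, G.not_isDiag_of_mem_edgeSet (hpqG e he)⟩
  have hH : H.IsAcyclic := isAcyclic_of_edgeSet_subset_edges_append
    (edgeSet_subset_edgeSet.1 fun e he => hpqG e ((mem_H e).1 he).1)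
    (fun e he => ((mem_H e).1 he).1) hpq
  have hpH : ∀ e ∈ p.edges, e ∈ H.edgeSet := fun e he => hpqH e (List.mem_append_left _ he)
  have hqH : ∀ e ∈ q.edges, e ∈ H.edgeSet := fun e he => hpqH e (List.mem_append_right _ he)
  have heq := (hH.subsingleton_path u v).elim
    ⟨p.transfer H hpH, hp.transfer hpH⟩ ⟨q.transfer H hqH, hq.transfer hqH⟩
  exact Walk.ext_support (by simpa using congrArg (fun r : H.Path u v => r.1.support) heq)

theorem exists_adj_dist_add_one_eq (huv : G.dist u v ≠ 0) :
    ∃ w, G.Adj w v ∧ G.dist u w + 1 = G.dist u v := by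
  obtain ⟨p, hp⟩ := exists_walk_of_dist_ne_zero huv
  have hnil : ¬ p.Nil := fun h => huv (hp ▸ Walk.length_eq_zero_iff.2 h)
  have hadj := p.adj_penultimate hnil
  refine ⟨p.penultimate, hadj, ?_⟩
  have hle := dist_le p.dropLast
  have hlen : p.dropLast.length + 1 = p.length := Walk.length_dropLast_add_one hnil
  have := hadj.diff_dist_adj (u := u)
  omega

theorem eq_of_adj_of_dist_add_one_eq (huv : ((2 * G.dist u v : ℕ) : ℕ∞) < G.egirth)
    (hw : G.Adj w v) (hw' : G.Adj w' v) (hd : G.dist u w + 1 = G.dist u v)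
    (hd' : G.dist u w' + 1 = G.dist u v) : w = w' := by
  have hr : G.Reachable u v := .of_dist_ne_zero (by omega)
  obtain ⟨p, hp⟩ := (hr.trans hw.symm.reachable).exists_walk_length_eq_dist
  obtain ⟨q, hq⟩ := (hr.trans hw'.symm.reachable).exists_walk_length_eq_dist
  have hpl : (p.concat hw).length = G.dist u v := by rw [Walk.length_concat, hp, hd]
  have hql : (q.concat hw').length = G.dist u v := by rw [Walk.length_concat, hq, hd']
  have heq := eq_of_isPath_of_length_add_length_lt_egirth
    (Walk.isPath_of_length_eq_dist _ hpl) (Walk.isPath_of_length_eq_dist _ hql)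
    (by rwa [hpl, hql, ← two_mul])
  simpa only [Walk.penultimate_concat] using congrArg Walk.penultimate heq

theorem even_dist_iff_of_coloring (c : G.Coloring Bool) (huv : G.Reachable u v) :
    Even (G.dist u v) ↔ (c u ↔ c v) := by
  obtain ⟨p, hp⟩ := huv.exists_walk_length_eq_dist
  exact hp ▸ c.even_length_iff_congr p

theorem dist_eq_add_one_or_of_coloring (c : G.Coloring Bool) (huv : G.Reachable u v)
    (hvw : G.Adj v w) : G.dist u w = G.dist u v + 1 ∨ G.dist u w + 1 = G.dist u v := by
  have hne : G.dist u w ≠ G.dist u v := by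
    intro h
    have hv := even_dist_iff_of_coloring c huv
    have hw := even_dist_iff_of_coloring c (huv.trans hvw.reachable)
    have := c.valid hvw
    rw [h] at hw
    grind
  have := hvw.diff_dist_adj (u := u)
  omega

theorem finite_setOf_dist_le (hG : G.Preconnected) (hfin : ∀ v, (G.neighborSet v).Finite) (u : V)
    (n : ℕ) : {v | G.dist u v ≤ n}.Finite := by
  induction n with
  | zero =>
    refine (Set.finite_singleton u).subset fun v hv => ?_
    exact ((hG u v).dist_eq_zero_iff.1 (Nat.le_zero.1 hv)).symm
  | succ n ih =>
    refine (ih.union (ih.biUnion fun w _ => hfin w)).subset fun v (hv : G.dist u v ≤ n + 1) => ?_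
    by_cases h0 : G.dist u v = 0
    · exact Or.inl (h0.le.trans (Nat.zero_le n))
    · obtain ⟨w, hw, hd⟩ := exists_adj_dist_add_one_eq h0
      have hwn : G.dist u w ≤ n := by omega
      exact Or.inr (Set.mem_biUnion hwn hw)

end Graph

/-! ### Counting, traces and arithmetic -/

theorem ncard_eq_ncard_mul_of_existsUnique {α β : Type*} {A : Set α} {B : Set β}
    {r : α → β → Prop} {n : ℕ} (hA : A.Finite) (hB : B.Finite) (hr : ∀ a ∈ A, ∃! b, b ∈ B ∧ r a b)
    (hn : ∀ b ∈ B, {a ∈ A | r a b}.ncard = n) : A.ncard = B.ncard * n := by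
  classical
  lift A to Finset α using hA
  lift B to Finset β using hB
  rw [Set.ncard_coe_finset, Set.ncard_coe_finset, ← mul_one A.card]
  refine Finset.card_mul_eq_card_mul r (fun a ha => ?_) (fun b hb => ?_)
  · obtain ⟨b, hb, hb_unique⟩ := hr a ha
    refine Finset.card_eq_one.2 ⟨b, Finset.eq_singleton_iff_unique_mem.2 ⟨?_, fun c hc => ?_⟩⟩
    · exact (Finset.mem_bipartiteAbove r).2 hb
    · exact hb_unique c ((Finset.mem_bipartiteAbove r).1 hc)
  · rw [← hn b hb, ← Set.ncard_coe_finset, Finset.bipartiteBelow, Finset.coe_filter]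
    rfl

theorem sum_eq_add_mul {ι : Type*} {A : Finset ι} {f : ι → ℝ} {a : ι} {n : ℕ} {c : ℝ}
    (hA : A.card = n + 1) (ha : a ∈ A) (hf : ∀ b ∈ A, b ≠ a → f b = c) :
    ∑ b ∈ A, f b = f a + n * c := by
  classical
  rw [← Finset.add_sum_erase _ _ ha, Finset.sum_congr rfl fun b hb =>
    hf b (Finset.mem_of_mem_erase hb) (Finset.ne_of_mem_erase hb), Finset.sum_const,
    Finset.card_erase_of_mem ha, hA, Nat.add_sub_cancel, nsmul_eq_mul]

theorem exists_nat_trace_eq_of_isIdempotentElem {n : Type*} [Fintype n]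
    {E : Matrix n n ℝ} (hE : IsIdempotentElem E) : ∃ m : ℕ, E.trace = m := by
  classical
  have h : IsIdempotentElem (Matrix.toLin' E) := by
    rw [IsIdempotentElem, Module.End.mul_eq_comp, ← Matrix.toLin'_mul, hE]
  refine ⟨Module.finrank ℝ (LinearMap.range (Matrix.toLin' E)), ?_⟩
  rw [← Matrix.trace_toLin'_eq]
  exact (LinearMap.IsIdempotentElem.isProj_range _ h).trace

theorem not_sq_add_mul_add_sq_dvd {s t n : ℤ} (ht : 1 < t) (hs : s = (t + 1) * t)
    (hn : n ^ 2 = s * t) :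
    ¬ s ^ 2 + s * t + t ^ 2 ∣ s * t * (s ^ 2 - 1) * (t ^ 2 - 1) * n := by
  intro hdvd
  have ht0 : t ≠ 0 := by omega
  obtain ⟨k, rfl⟩ : t ∣ n := (Int.pow_dvd_pow_iff two_ne_zero).1 ⟨t + 1, by rw [hn, hs]; ring⟩
  have hk : t = k ^ 2 - 1 := by
    have : t ^ 2 * k ^ 2 = t ^ 2 * (t + 1) := by linear_combination hn + t * hs
    linarith [mul_left_cancel₀ (pow_ne_zero 2 ht0) this]
  obtain ⟨q, hq⟩ : k ^ 4 + k ^ 2 + 1 ∣ (t + 1) * t * (s ^ 2 - 1) * (t ^ 2 - 1) * k := by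
    refine (mul_dvd_mul_iff_left (pow_ne_zero 2 ht0)).1 (Dvd.dvd.trans ?_ (hdvd.trans ?_))
    · exact ⟨1, by rw [hs, hk]; ring⟩
    · exact ⟨1, by rw [hs]; ring⟩
  -- `k ^ 4 + k ^ 2 + 1` divides `k ^ 6 - 1`, so the dividend can be reduced to degree `3` in `k`.
  have hmod : k ^ 4 + k ^ 2 + 1 ∣ (k ^ 2 + 5) * (4 * k) := by
    refine ⟨q - k * (k ^ 12 - 6 * k ^ 10 + 14 * k ^ 8 - 15 * k ^ 6 + 2 * k ^ 4 + 16 * k ^ 2 - 20),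
      ?_⟩
    rw [hs, hk] at hq
    linear_combination hq
  have hcop : IsCoprime (k ^ 4 + k ^ 2 + 1) (4 * k) := by
    refine IsCoprime.mul_right ?_ ⟨1, -(k ^ 3 + k), by ring⟩
    obtain ⟨j, hj⟩ := Int.even_mul_succ_self (k ^ 2)
    exact ⟨k ^ 4 + k ^ 2 + 1, -(j ^ 2 + j),
      by linear_combination (k ^ 4 + k ^ 2 + 2 * j + 2) * hj⟩
  have hle := Int.le_of_dvd (by positivity) (hcop.dvd_of_dvd_mul_right hmod)
  nlinarith

namespace GenHexagon

variable {Γ : GenHexagon}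

/-! ### Distances in a generalised hexagon -/

/-- The distance between two points in the incidence graph: `0`, `2`, `4` or `6` for equal,
collinear, special or opposite points. -/
noncomputable def pointDist (Γ : GenHexagon) (x y : Γ.Point) : ℕ :=
  Γ.incGraph.dist (Sum.inl x) (Sum.inl y)

/-- The distance from a point to a line in the incidence graph: `1`, `3` or `5`. -/
noncomputable def lineDist (Γ : GenHexagon) (x : Γ.Point) (L : Γ.Line) : ℕ :=
  Γ.incGraph.dist (Sum.inl x) (Sum.inr L)

/-- The bipartition of the incidence graph into points and lines. -/
def incColoring (Γ : GenHexagon) : Γ.incGraph.Coloring Bool :=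
  SimpleGraph.Coloring.mk Sum.isLeft (by
    rintro (x | L) (y | M) h <;> simp_all [incGraph, incAdj])

theorem pointDist_comm (x y : Γ.Point) : Γ.pointDist x y = Γ.pointDist y x :=
  SimpleGraph.dist_comm

@[simp]
theorem pointDist_self (x : Γ.Point) : Γ.pointDist x x = 0 :=
  SimpleGraph.dist_self

theorem ne_of_pointDist_ne_zero {x y : Γ.Point} (h : Γ.pointDist x y ≠ 0) : x ≠ y := by
  rintro rfl
  exact h (pointDist_self x)

theorem lineDist_eq_one {x : Γ.Point} {L : Γ.Line} : Γ.lineDist x L = 1 ↔ x ∈ Γ.pts L :=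
  SimpleGraph.dist_eq_one_iff_adj

namespace IsGenHexagon

variable {x y z c c' : Γ.Point} {L M : Γ.Line}

theorem preconnected (hΓ : Γ.IsGenHexagon) : Γ.incGraph.Preconnected :=
  SimpleGraph.preconnected_of_ediam_ne_top (by rw [hΓ.1]; decide)

theorem dist_le_six (hΓ : Γ.IsGenHexagon) (u v : Γ.Point ⊕ Γ.Line) :
    Γ.incGraph.dist u v ≤ 6 := by
  have h := SimpleGraph.edist_le_ediam (G := Γ.incGraph) (u := u) (v := v)
  rw [hΓ.1, ← (hΓ.preconnected u v).coe_dist_eq_edist] at h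
  exact_mod_cast h

theorem eq_of_adj_of_dist_add_one_eq (hΓ : Γ.IsGenHexagon) {u v w w' : Γ.Point ⊕ Γ.Line}
    (huv : Γ.incGraph.dist u v < 6) (hw : Γ.incGraph.Adj w v) (hw' : Γ.incGraph.Adj w' v)
    (hd : Γ.incGraph.dist u w + 1 = Γ.incGraph.dist u v)
    (hd' : Γ.incGraph.dist u w' + 1 = Γ.incGraph.dist u v) : w = w' := by
  refine _root_.eq_of_adj_of_dist_add_one_eq ?_ hw hw' hd hd'
  rw [hΓ.2]
  exact_mod_cast (by omega : 2 * Γ.incGraph.dist u v < 12)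

theorem pointDist_cases (hΓ : Γ.IsGenHexagon) (x y : Γ.Point) :
    Γ.pointDist x y = 0 ∨ Γ.pointDist x y = 2 ∨ Γ.pointDist x y = 4 ∨ Γ.pointDist x y = 6 := by
  have hle : Γ.pointDist x y ≤ 6 := hΓ.dist_le_six _ _
  obtain ⟨k, hk⟩ : Even (Γ.pointDist x y) :=
    (even_dist_iff_of_coloring Γ.incColoring (hΓ.preconnected _ _)).2 Iff.rfl
  omega

theorem lineDist_cases (hΓ : Γ.IsGenHexagon) (x : Γ.Point) (L : Γ.Line) :
    Γ.lineDist x L = 1 ∨ Γ.lineDist x L = 3 ∨ Γ.lineDist x L = 5 := by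
  have hle : Γ.lineDist x L ≤ 6 := hΓ.dist_le_six _ _
  obtain ⟨k, hk⟩ : Odd (Γ.lineDist x L) := by
    rw [← Nat.not_even_iff_odd, lineDist,
      even_dist_iff_of_coloring Γ.incColoring (hΓ.preconnected _ _)]
    exact fun h => Bool.false_ne_true (h.1 rfl)
  omega

theorem pointDist_eq_zero (hΓ : Γ.IsGenHexagon) : Γ.pointDist x y = 0 ↔ x = y := by
  rw [pointDist, (hΓ.preconnected _ _).dist_eq_zero_iff, Sum.inl.injEq]

theorem pointDist_of_mem (hΓ : Γ.IsGenHexagon) (x : Γ.Point) (hy : y ∈ Γ.pts L) :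
    Γ.pointDist x y = Γ.lineDist x L + 1 ∨ Γ.pointDist x y + 1 = Γ.lineDist x L :=
  dist_eq_add_one_or_of_coloring Γ.incColoring (hΓ.preconnected _ _)
    (show Γ.incGraph.Adj (Sum.inr L) (Sum.inl y) from hy)

theorem exists_mem_pointDist_add_one_eq (hΓ : Γ.IsGenHexagon) (x : Γ.Point) (L : Γ.Line) :
    ∃ y ∈ Γ.pts L, Γ.pointDist x y + 1 = Γ.lineDist x L := by
  have hne : Γ.lineDist x L ≠ 0 := by have := hΓ.lineDist_cases x L; omega
  obtain ⟨y | M, hy, hd⟩ := exists_adj_dist_add_one_eq hne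
  · exact ⟨y, hy, hd⟩
  · exact hy.elim

theorem eq_of_pointDist_add_one_eq (hΓ : Γ.IsGenHexagon) (hy : y ∈ Γ.pts L) (hz : z ∈ Γ.pts L)
    (hxy : Γ.pointDist x y + 1 = Γ.lineDist x L) (hxz : Γ.pointDist x z + 1 = Γ.lineDist x L) :
    y = z := by
  have hlt : Γ.lineDist x L < 6 := by have := hΓ.lineDist_cases x L; omega
  exact Sum.inl_injective (hΓ.eq_of_adj_of_dist_add_one_eq hlt hy hz hxy hxz)

theorem exists_mem_lineDist_add_one_eq (hΓ : Γ.IsGenHexagon) (hxy : x ≠ y) :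
    ∃ L, y ∈ Γ.pts L ∧ Γ.lineDist x L + 1 = Γ.pointDist x y := by
  obtain ⟨z | L, hy, hd⟩ := exists_adj_dist_add_one_eq (mt hΓ.pointDist_eq_zero.1 hxy)
  · exact hy.elim
  · exact ⟨L, hy, hd⟩

theorem eq_of_lineDist_add_one_eq (hΓ : Γ.IsGenHexagon) (hL : y ∈ Γ.pts L) (hM : y ∈ Γ.pts M)
    (hxy : Γ.pointDist x y < 6) (hxL : Γ.lineDist x L + 1 = Γ.pointDist x y)
    (hxM : Γ.lineDist x M + 1 = Γ.pointDist x y) : L = M :=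
  Sum.inr_injective (hΓ.eq_of_adj_of_dist_add_one_eq hxy hL hM hxL hxM)

theorem collinear_iff (hΓ : Γ.IsGenHexagon) : Γ.Collinear x y ↔ Γ.pointDist x y = 2 := by
  constructor
  · rintro ⟨hne, L, hx, hy⟩
    have hd := hΓ.pointDist_of_mem x hy
    rw [lineDist_eq_one.2 hx] at hd
    have := mt hΓ.pointDist_eq_zero.1 hne
    omega
  · intro h
    have hne : x ≠ y := ne_of_pointDist_ne_zero (by omega)
    obtain ⟨L, hy, hd⟩ := hΓ.exists_mem_lineDist_add_one_eq hne
    exact ⟨hne, L, lineDist_eq_one.1 (by omega), hy⟩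

theorem exists_pointDist_eq_two (hΓ : Γ.IsGenHexagon) (hxy : Γ.pointDist x y = 4) :
    ∃ c, Γ.pointDist x c = 2 ∧ Γ.pointDist y c = 2 := by
  have hne : x ≠ y := ne_of_pointDist_ne_zero (by omega)
  obtain ⟨L, hyL, hxL⟩ := hΓ.exists_mem_lineDist_add_one_eq hne
  obtain ⟨c, hcL, hxc⟩ := hΓ.exists_mem_pointDist_add_one_eq x L
  refine ⟨c, by omega, hΓ.collinear_iff.1 ⟨?_, L, hyL, hcL⟩⟩
  rintro rfl
  omega

theorem special_iff (hΓ : Γ.IsGenHexagon) : Γ.Special x y ↔ Γ.pointDist x y = 4 := by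
  constructor
  · rintro ⟨hne, hxy, c, hxc, -, L, hyL, hcL⟩
    have hxc := hΓ.collinear_iff.1 hxc
    have hxy := mt hΓ.collinear_iff.2 hxy
    have h0 := mt hΓ.pointDist_eq_zero.1 hne
    have hc := hΓ.pointDist_of_mem x hcL
    have hy := hΓ.pointDist_of_mem x hyL
    have := hΓ.pointDist_cases x y
    omega
  · intro h
    obtain ⟨c, hxc, hyc⟩ := hΓ.exists_pointDist_eq_two h
    exact ⟨ne_of_pointDist_ne_zero (by omega), mt hΓ.collinear_iff.1 (by omega), c,
      hΓ.collinear_iff.2 hxc, hΓ.collinear_iff.2 hyc⟩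

theorem opposite_iff (hΓ : Γ.IsGenHexagon) : Γ.Opposite x y ↔ Γ.pointDist x y = 6 := by
  rw [Opposite, hΓ.collinear_iff, hΓ.special_iff, ne_eq, ← hΓ.pointDist_eq_zero]
  have := hΓ.pointDist_cases x y
  omega

theorem eq_of_pointDist_eq_two (hΓ : Γ.IsGenHexagon) (hxy : Γ.pointDist x y = 4)
    (hxc : Γ.pointDist x c = 2) (hyc : Γ.pointDist y c = 2)
    (hxc' : Γ.pointDist x c' = 2) (hyc' : Γ.pointDist y c' = 2) : c = c' := by
  obtain ⟨-, L, hyL, hcL⟩ := hΓ.collinear_iff.2 hyc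
  obtain ⟨-, M, hyM, hcM⟩ := hΓ.collinear_iff.2 hyc'
  have hxL : Γ.lineDist x L = 3 := by
    have := hΓ.pointDist_of_mem x hyL
    have := hΓ.pointDist_of_mem x hcL
    omega
  have hxM : Γ.lineDist x M = 3 := by
    have := hΓ.pointDist_of_mem x hyM
    have := hΓ.pointDist_of_mem x hcM
    omega
  obtain rfl : L = M := hΓ.eq_of_lineDist_add_one_eq hyL hyM (x := x) (by omega) (by omega)
    (by omega)
  exact hΓ.eq_of_pointDist_add_one_eq (x := x) hcL hcM (by omega) (by omega)

theorem eq_of_lineDist_eq_three (hΓ : Γ.IsGenHexagon) (hz : Γ.lineDist z M = 5)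
    (hx : Γ.pointDist x z = 2) (hy : Γ.pointDist y z = 2) (hxM : Γ.lineDist x M = 3)
    (hyM : Γ.lineDist y M = 3) : x = y := by
  have dist_proj : ∀ {u p : Γ.Point}, p ∈ Γ.pts M → Γ.pointDist u z = 2 →
      Γ.pointDist u p = 2 → Γ.pointDist z p = 4 := by
    intro u p hpM huz hup
    obtain ⟨-, N, huN, hpN⟩ := hΓ.collinear_iff.2 hup
    have := hΓ.pointDist_of_mem z huN
    have := hΓ.pointDist_of_mem z hpN
    have := hΓ.pointDist_of_mem z hpM
    rw [pointDist_comm] at huz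
    omega
  obtain ⟨p, hpM, hxp⟩ := hΓ.exists_mem_pointDist_add_one_eq x M
  obtain ⟨q, hqM, hyq⟩ := hΓ.exists_mem_pointDist_add_one_eq y M
  have hzp := dist_proj hpM hx (by omega)
  have hzq := dist_proj hqM hy (by omega)
  obtain rfl : p = q := hΓ.eq_of_pointDist_add_one_eq hpM hqM (x := z) (by omega) (by omega)
  rw [pointDist_comm] at hx hy hxp hyq
  exact hΓ.eq_of_pointDist_eq_two hzp hx (by omega) hy (by omega)

end IsGenHexagon

namespace HasOrder

variable {s t : ℕ}

theorem ncard_pts (hord : Γ.HasOrder s t) (L : Γ.Line) : (Γ.pts L).ncard = s + 1 := by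
  rw [Set.ncard, hord.1]; rfl

theorem finite_pts (hord : Γ.HasOrder s t) (L : Γ.Line) : (Γ.pts L).Finite :=
  Set.finite_of_ncard_ne_zero (by rw [hord.ncard_pts]; omega)

theorem ncard_lines (hord : Γ.HasOrder s t) (x : Γ.Point) : {L | x ∈ Γ.pts L}.ncard = t + 1 := by
  rw [Set.ncard, hord.2]; rfl

theorem finite_lines (hord : Γ.HasOrder s t) (x : Γ.Point) : {L | x ∈ Γ.pts L}.Finite :=
  Set.finite_of_ncard_ne_zero (by rw [hord.ncard_lines]; omega)

theorem finite_neighborSet (hord : Γ.HasOrder s t) (v : Γ.Point ⊕ Γ.Line) :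
    (Γ.incGraph.neighborSet v).Finite := by
  rcases v with x | L
  · refine ((hord.finite_lines x).image Sum.inr).subset ?_
    rintro (y | M) h
    · exact h.elim
    · exact ⟨M, h, rfl⟩
  · refine ((hord.finite_pts L).image Sum.inl).subset ?_
    rintro (y | M) h
    · exact ⟨y, h, rfl⟩
    · exact h.elim

end HasOrder

namespace IsGenHexagon

variable {s t : ℕ} {x y c : Γ.Point} {L M : Γ.Line}

theorem finite_point_sum_line (hΓ : Γ.IsGenHexagon) (hord : Γ.HasOrder s t) :
    Finite (Γ.Point ⊕ Γ.Line) := by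
  rcases isEmpty_or_nonempty (Γ.Point ⊕ Γ.Line) with _ | ⟨⟨u⟩⟩
  · infer_instance
  · refine Set.finite_univ_iff.1 (Set.Finite.subset ?_ fun v _ => hΓ.dist_le_six u v)
    exact finite_setOf_dist_le hΓ.preconnected hord.finite_neighborSet u 6

theorem finite_point (hΓ : Γ.IsGenHexagon) (hord : Γ.HasOrder s t) : Finite Γ.Point :=
  have := hΓ.finite_point_sum_line hord
  Finite.sum_left Γ.Line

theorem finite_line (hΓ : Γ.IsGenHexagon) (hord : Γ.HasOrder s t) : Finite Γ.Line :=
  have := hΓ.finite_point_sum_line hord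
  Finite.sum_right Γ.Point

theorem lineDist_eq_five (hΓ : Γ.IsGenHexagon) (hLM : L ≠ M) (hL : c ∈ Γ.pts L)
    (hM : c ∈ Γ.pts M) (hx : x ∉ Γ.pts L) (hxc : Γ.pointDist x c = Γ.lineDist x L + 1) :
    Γ.lineDist x M = 5 := by
  have := mt lineDist_eq_one.1 hx
  have := hΓ.lineDist_cases x L
  have := hΓ.lineDist_cases x M
  have := hΓ.pointDist_of_mem x hM
  by_contra h
  exact hLM (hΓ.eq_of_lineDist_add_one_eq (x := x) hL hM (by omega) (by omega) (by omega))

theorem pointDist_eq_six (hΓ : Γ.IsGenHexagon) (hxL : Γ.lineDist x L = 3) (hc : c ∈ Γ.pts L)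
    (hxc : Γ.pointDist x c = 4) (hyc : Γ.pointDist y c = 2) (hy : y ∉ Γ.pts L) :
    Γ.pointDist x y = 6 := by
  obtain ⟨hne, M, hyM, hcM⟩ := hΓ.collinear_iff.2 hyc
  have hxM : Γ.lineDist x M = 5 := by
    refine hΓ.lineDist_eq_five (L := L) (c := c) ?_ hc hcM (mt lineDist_eq_one.2 ?_) (by omega)
    · rintro rfl
      exact hy hyM
    · omega
  rcases hΓ.pointDist_of_mem x hyM with h | h
  · omega
  · exact absurd (hΓ.eq_of_pointDist_add_one_eq (x := x) hyM hcM h (by omega)) hne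

end IsGenHexagon

/-! ### Blocking sets of pairwise special points -/

/-- A blocking set of special points in a generalised hexagon of order `(s, t)`: `s + 1` pairwise
special points such that no point is opposite all of them. -/
structure IsSpecialBlockingSet (Γ : GenHexagon) (s t : ℕ) (S : Set Γ.Point) : Prop where
  isGenHexagon : Γ.IsGenHexagon
  hasOrder : Γ.HasOrder s t
  encard_eq : S.encard = s + 1
  blocking : ¬ ∃ y, ∀ x ∈ S, Γ.Opposite y x
  special : ∀ x ∈ S, ∀ y ∈ S, x ≠ y → Γ.Special x y

namespace IsSpecialBlockingSet

variable {s t : ℕ} {S : Set Γ.Point} {a c q w x y z : Γ.Point} {L : Γ.Line}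

theorem ncard_eq (h : IsSpecialBlockingSet Γ s t S) : S.ncard = s + 1 := by
  rw [Set.ncard, h.encard_eq]; rfl

theorem finite (h : IsSpecialBlockingSet Γ s t S) : S.Finite :=
  Set.finite_of_ncard_ne_zero (by rw [h.ncard_eq]; omega)

theorem exists_pointDist_ne_six (h : IsSpecialBlockingSet Γ s t S) (q : Γ.Point) :
    ∃ x ∈ S, Γ.pointDist x q ≠ 6 := by
  by_contra! hq
  exact h.blocking ⟨q, fun x hx => h.isGenHexagon.opposite_iff.2 (pointDist_comm q x ▸ hq x hx)⟩

theorem pointDist_eq_four (h : IsSpecialBlockingSet Γ s t S) (hx : x ∈ S) (hy : y ∈ S)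
    (hxy : x ≠ y) : Γ.pointDist x y = 4 :=
  h.isGenHexagon.special_iff.1 (h.special x hx y hy hxy)

theorem eq_of_mem_pts (h : IsSpecialBlockingSet Γ s t S) (hx : x ∈ S) (hy : y ∈ S)
    (hxL : x ∈ Γ.pts L) (hyL : y ∈ Γ.pts L) : x = y := by
  by_contra hxy
  exact (h.special x hx y hy hxy).2.1 ⟨hxy, L, hxL, hyL⟩

theorem pointDist_ne_two (h : IsSpecialBlockingSet Γ s t S) (hx : x ∈ S) (hy : y ∈ S) :
    Γ.pointDist x y ≠ 2 := fun hxy => by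
  have := h.pointDist_eq_four hx hy (ne_of_pointDist_ne_zero (by omega))
  omega

theorem exists_forall_pointDist_eq (h : IsSpecialBlockingSet Γ s t S) (hx : x ∈ S) (hy : y ∈ S)
    (hxy : x ≠ y) (ha : a ∈ Γ.pts L) (hxa : Γ.pointDist x a + 1 = Γ.lineDist x L)
    (hya : Γ.pointDist y a + 1 = Γ.lineDist y L) :
    ∃ q ∈ Γ.pts L, ∀ u ∈ S, Γ.pointDist u q = Γ.lineDist u L + 1 := by
  have hΓ := h.isGenHexagon
  choose f hf hfd using fun u => hΓ.exists_mem_pointDist_add_one_eq u L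
  by_contra! hL
  have hsurj : ∀ p ∈ Γ.pts L, ∃ u, ∃ _ : u ∈ S, f u = p := by
    intro p hp
    obtain ⟨u, hu, hup⟩ := hL p hp
    exact ⟨u, hu, hΓ.eq_of_pointDist_add_one_eq (hf u) hp (hfd u)
      ((hΓ.pointDist_of_mem u hp).resolve_left hup)⟩
  refine hxy (Set.inj_on_of_surj_on_of_ncard_le (fun u _ => f u) (fun u _ => hf u) hsurj ?_ hx hy ?_
    h.finite)
  · rw [h.ncard_eq, h.hasOrder.ncard_pts]
  · rw [hΓ.eq_of_pointDist_add_one_eq (hf x) ha (hfd x) hxa,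
      hΓ.eq_of_pointDist_add_one_eq (hf y) ha (hfd y) hya]

theorem eq_of_forall_lineDist_eq_five (h : IsSpecialBlockingSet Γ s t S)
    (hL : ∀ u ∈ S, Γ.lineDist u L = 5) (hq : q ∈ Γ.pts L) (hx : x ∈ S) (hy : y ∈ S)
    (hxq : Γ.pointDist x q = 4) (hyq : Γ.pointDist y q = 4) : x = y := by
  by_contra hxy
  obtain ⟨p, -, hp⟩ := h.exists_forall_pointDist_eq hx hy hxy hq (by rw [hxq, hL x hx])
    (by rw [hyq, hL y hy])
  obtain ⟨u, hu, hup⟩ := h.exists_pointDist_ne_six p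
  exact hup (by rw [hp u hu, hL u hu])

theorem exists_mem_pts (h : IsSpecialBlockingSet Γ s t S) (ht : 0 < t)
    (hS : {u ∈ S | Γ.pointDist u a = 2}.Nontrivial) (ha : a ∈ Γ.pts L) :
    ∃ u ∈ S, u ∈ Γ.pts L := by
  have hΓ := h.isGenHexagon
  by_contra! hL
  have lineDist_eq : ∀ {u}, u ∈ S → Γ.pointDist u a = 2 → Γ.lineDist u L = 3 := by
    intro u hu hua
    have := mt lineDist_eq_one.1 (hL u hu)
    have := hΓ.pointDist_of_mem u ha
    omega
  obtain ⟨x, ⟨hx, hxa⟩, y, ⟨hy, hya⟩, hxy⟩ := hS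
  have hxL := lineDist_eq hx hxa
  have hyL := lineDist_eq hy hya
  obtain ⟨q, hqL, hq⟩ := h.exists_forall_pointDist_eq hx hy hxy ha (by omega) (by omega)
  obtain ⟨M, hqM, hML⟩ : ∃ M ∈ {M | q ∈ Γ.pts M}, M ≠ L :=
    Set.exists_ne_of_one_lt_ncard (by rw [h.hasOrder.ncard_lines]; omega) L
  have hfar : ∀ u ∈ S, Γ.lineDist u M = 5 := fun u hu =>
    hΓ.lineDist_eq_five hML.symm hqL hqM (hL u hu) (hq u hu)
  exact hxy (h.eq_of_forall_lineDist_eq_five hfar hqM hx hy (by rw [hq x hx, hxL])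
    (by rw [hq y hy, hyL]))

theorem ncard_collinear (h : IsSpecialBlockingSet Γ s t S) (ht : 0 < t)
    (hS : {u ∈ S | Γ.pointDist u a = 2}.Nontrivial) :
    {u ∈ S | Γ.pointDist u a = 2}.ncard = t + 1 := by
  have hΓ := h.isGenHexagon
  rw [← h.hasOrder.ncard_lines a]
  choose f hfu hfa using fun (u : Γ.Point) (hu : u ∈ {u ∈ S | Γ.pointDist u a = 2}) =>
    (hΓ.collinear_iff.2 hu.2).2
  refine Set.ncard_congr f hfa (fun u v hu hv huv => ?_) fun L (hL : a ∈ Γ.pts L) => ?_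
  · exact h.eq_of_mem_pts hu.1 hv.1 (hfu u hu) (huv ▸ hfu v hv)
  · obtain ⟨u, hu, huL⟩ := h.exists_mem_pts ht hS hL
    have hua : Γ.pointDist u a = 2 := by
      obtain ⟨x, ⟨hx, hxa⟩, -⟩ := hS
      refine hΓ.collinear_iff.1 ⟨?_, L, huL, hL⟩
      rintro rfl
      exact h.pointDist_ne_two hx hu hxa
    refine ⟨u, ⟨hu, hua⟩, hΓ.eq_of_lineDist_add_one_eq (x := u) (hfa u ⟨hu, hua⟩) hL
      (by omega) ?_ ?_⟩
    · rw [lineDist_eq_one.2 (hfu u ⟨hu, hua⟩), hua]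
    · rw [lineDist_eq_one.2 huL, hua]

theorem mem_of_special (h : IsSpecialBlockingSet Γ s t S)
    (hSa : ∀ u ∈ S, Γ.pointDist u a = 2) (hqa : Γ.pointDist q a = 6)
    (hSq : {u ∈ S | Γ.pointDist q u = 4}.Nontrivial) (hwa : Γ.pointDist w a = 2)
    (hqw : Γ.pointDist q w = 4) : w ∈ S := by
  have hΓ := h.isGenHexagon
  obtain ⟨x, ⟨hx, hqx⟩, y, ⟨hy, hqy⟩, hxy⟩ := hSq
  obtain ⟨M, hqM, hwM⟩ := hΓ.exists_mem_lineDist_add_one_eq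
    (ne_of_pointDist_ne_zero (x := w) (y := q) (by rw [pointDist_comm]; omega))
  have haM : Γ.lineDist a M = 5 := by
    have := hΓ.pointDist_of_mem a hqM
    have := hΓ.lineDist_cases a M
    rw [pointDist_comm] at hqa
    omega
  by_contra hw
  refine hxy (h.eq_of_forall_lineDist_eq_five (L := M) (fun u hu => ?_) hqM hx hy
    (pointDist_comm q x ▸ hqx) (pointDist_comm q y ▸ hqy))
  have hu1 : Γ.lineDist u M ≠ 1 := by
    intro hu1
    have := hΓ.pointDist_of_mem a (lineDist_eq_one.1 hu1)
    rw [pointDist_comm, hSa u hu] at this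
    omega
  have hu3 : Γ.lineDist u M ≠ 3 := fun hu3 =>
    hw (hΓ.eq_of_lineDist_eq_three haM (hSa u hu) hwa hu3
      (by rw [pointDist_comm] at hqw; omega) ▸ hu)
  have := hΓ.lineDist_cases u M
  omega

theorem isHyperbolicLine (h : IsSpecialBlockingSet Γ s t S)
    (hSa : ∀ u ∈ S, Γ.pointDist u a = 2) : Γ.IsHyperbolicLine S := by
  have hΓ := h.isGenHexagon
  refine ⟨h.special, a, fun u hu => hΓ.collinear_iff.2 (hSa u hu), fun q hqa hSq => ?_⟩
  simp only [hΓ.special_iff, hΓ.collinear_iff] at hSq ⊢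
  rw [hΓ.opposite_iff] at hqa
  refine Set.Subset.antisymm (fun w hw => h.mem_of_special hSa hqa hSq hw.2 hw.1) fun u hu => ?_
  obtain ⟨-, N, huN, haN⟩ := hΓ.collinear_iff.2 (hSa u hu)
  obtain ⟨p, hpN, hqp⟩ := hΓ.exists_mem_pointDist_add_one_eq q N
  have hqp : Γ.pointDist q p = 4 := by
    have := hΓ.pointDist_of_mem q haN
    have := hΓ.lineDist_cases q N
    omega
  have hpa : Γ.pointDist p a = 2 := hΓ.collinear_iff.1 ⟨by rintro rfl; omega, N, hpN, haN⟩
  obtain rfl : p = u := h.eq_of_mem_pts (h.mem_of_special hSa hqa hSq hpa hqp) hu hpN huN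
  exact ⟨hqp, hpa⟩

theorem pointDist_eq_two (h : IsSpecialBlockingSet Γ s t S) (hx : x ∈ S) (hy : y ∈ S)
    (hxL : Γ.lineDist x L = 3) (hyL : Γ.lineDist y L = 3) (hcL : c ∈ Γ.pts L)
    (hxc : Γ.pointDist x c = 2) : Γ.pointDist y c = 2 := by
  have hΓ := h.isGenHexagon
  by_contra hyc
  have hyc : Γ.pointDist y c = 4 := by
    have := hΓ.pointDist_of_mem y hcL
    omega
  have hyx := hΓ.pointDist_eq_six hyL hcL hyc hxc (mt lineDist_eq_one.2 (by omega))
  have := h.pointDist_eq_four hy hx (ne_of_pointDist_ne_zero (by omega))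
  omega

theorem ncard_lineDist_eq_three (h : IsSpecialBlockingSet Γ s t S) (ht : 0 < t) (hz : z ∈ S)
    (hzL : z ∈ Γ.pts L) (hy : y ∈ S) (hyL : Γ.lineDist y L = 3) :
    {u ∈ S | Γ.lineDist u L = 3}.ncard = t := by
  have hΓ := h.isGenHexagon
  have hyz : y ≠ z := by
    rintro rfl
    rw [lineDist_eq_one.2 hzL] at hyL
    omega
  have := h.pointDist_eq_four hy hz hyz
  obtain ⟨c, hcL, hyc⟩ := hΓ.exists_mem_pointDist_add_one_eq y L
  have hzc : Γ.pointDist z c = 2 := hΓ.collinear_iff.1 ⟨by rintro rfl; omega, L, hzL, hcL⟩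
  have heq : {u ∈ S | Γ.lineDist u L = 3} = {u ∈ S | Γ.pointDist u c = 2} \ {z} := by
    ext u
    constructor
    · rintro ⟨hu, huL⟩
      refine ⟨⟨hu, h.pointDist_eq_two hy hu hyL huL hcL (by omega)⟩, ?_⟩
      rintro rfl
      rw [lineDist_eq_one.2 hzL] at huL
      omega
    · rintro ⟨⟨hu, huc⟩, huz⟩
      have := hΓ.pointDist_of_mem u hcL
      have := mt lineDist_eq_one.1 fun huL => huz (h.eq_of_mem_pts hu hz huL hzL)
      exact ⟨hu, by omega⟩
  have hzS : z ∈ {u ∈ S | Γ.pointDist u c = 2} := ⟨hz, hzc⟩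
  have hSc : {u ∈ S | Γ.pointDist u c = 2}.Nontrivial := ⟨y, ⟨hy, by omega⟩, z, hzS, hyz⟩
  rw [heq, Set.ncard_sdiff_singleton_of_mem hzS, h.ncard_collinear ht hSc,
    Nat.add_sub_cancel]

theorem exists_lineDist_eq_three (h : IsSpecialBlockingSet Γ s t S) (ht : 0 < t)
    (hS : {u ∈ S | Γ.pointDist u a = 2}.Nontrivial) (hz : z ∈ S) (hza : Γ.pointDist z a ≠ 2)
    (hzL : z ∈ Γ.pts L) : ∃ u ∈ S, Γ.lineDist u L = 3 := by
  have hΓ := h.isGenHexagon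
  have pointDist_z : ∀ {u}, u ∈ {u ∈ S | Γ.pointDist u a = 2} → Γ.pointDist u z = 4 := fun hu =>
    h.pointDist_eq_four hu.1 hz fun huz => hza (huz ▸ hu.2)
  choose f hfz hf using fun (u : Γ.Point) (hu : u ∈ {u ∈ S | Γ.pointDist u a = 2}) =>
    hΓ.exists_mem_lineDist_add_one_eq
      (ne_of_pointDist_ne_zero (x := u) (y := z) (by rw [pointDist_z hu]; decide))
  replace hf : ∀ u hu, Γ.lineDist u (f u hu) = 3 := fun u hu => by
    have := hf u hu
    have := pointDist_z hu
    omega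
  have hinj : ∀ u v hu hv, f u hu = f v hv → u = v := by
    intro u v hu hv huv
    by_contra hne
    obtain ⟨c, hcL, huc⟩ := hΓ.exists_mem_pointDist_add_one_eq u (f u hu)
    have hvc := h.pointDist_eq_two hu.1 hv.1 (hf u hu) (huv ▸ hf v hv) hcL
      (by have := hf u hu; omega)
    obtain rfl : c = a := hΓ.eq_of_pointDist_eq_two (h.pointDist_eq_four hu.1 hv.1 hne)
      (by have := hf u hu; omega) hvc hu.2 hv.2
    refine hza (hΓ.collinear_iff.1 ⟨?_, _, hfz u hu, hcL⟩)
    rintro rfl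
    exact h.pointDist_ne_two hu.1 hz hu.2
  obtain ⟨u, hu, rfl⟩ := Set.surj_on_of_inj_on_of_ncard_le f hfz (fun u v hu hv => hinj u v hu hv)
    (by rw [h.ncard_collinear ht hS, h.hasOrder.ncard_lines]) (h.hasOrder.finite_lines z) L hzL
  exact ⟨u, hu.1, hf u hu⟩

theorem eq_mul_of_pointDist_ne_two (h : IsSpecialBlockingSet Γ s t S) (ht : 0 < t)
    (hS : {u ∈ S | Γ.pointDist u a = 2}.Nontrivial) (hz : z ∈ S) (hza : Γ.pointDist z a ≠ 2) :
    s = (t + 1) * t := by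
  have hΓ := h.isGenHexagon
  have hs : (S \ {z}).ncard = s := by
    rw [Set.ncard_sdiff_singleton_of_mem hz, h.ncard_eq, Nat.add_sub_cancel]
  rw [← hs, ← h.hasOrder.ncard_lines z]
  refine ncard_eq_ncard_mul_of_existsUnique (r := fun u L => Γ.lineDist u L = 3) h.finite.sdiff
    (h.hasOrder.finite_lines z) ?_ fun L (hL : z ∈ Γ.pts L) => ?_
  · rintro u ⟨hu, huz⟩
    have huz := h.pointDist_eq_four hu hz huz
    obtain ⟨L, hzL, huL⟩ := hΓ.exists_mem_lineDist_add_one_eq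
      (ne_of_pointDist_ne_zero (x := u) (y := z) (by omega))
    exact ⟨L, ⟨hzL, by omega⟩, fun M hM =>
      hΓ.eq_of_lineDist_add_one_eq (x := u) hM.1 hzL (by omega) (by rw [hM.2, huz]) huL⟩
  · obtain ⟨y, hy, hyL⟩ := h.exists_lineDist_eq_three ht hS hz hza hL
    rw [← h.ncard_lineDist_eq_three ht hz hL hy hyL]
    congr 1
    ext u
    refine ⟨fun hu => ⟨hu.1.1, hu.2⟩, fun hu => ⟨⟨hu.1, ?_⟩, hu.2⟩⟩
    rintro rfl
    have := lineDist_eq_one.2 hL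
    have := hu.2
    omega

end IsSpecialBlockingSet

/-! ### Eigenvalues and their multiplicities -/

open scoped Classical in
/-- The point-line incidence matrix. -/
noncomputable def incMatrix (Γ : GenHexagon) : Matrix Γ.Point Γ.Line ℝ :=
  Matrix.of fun x L => if x ∈ Γ.pts L then 1 else 0

/-- The matrix whose `(x, y)` entry is `f` at the distance of the points `x` and `y`; only the
values of `f` at `0`, `2`, `4` and `6` matter. -/
noncomputable def distMatrix (Γ : GenHexagon) (f : ℕ → ℝ) : Matrix Γ.Point Γ.Point ℝ :=
  Matrix.of fun x y => f (Γ.pointDist x y)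

/-- The matrix `N Nᵀ`, with `N` the incidence matrix; its entries count the lines through two
points. -/
noncomputable def gramMatrix (Γ : GenHexagon) [Fintype Γ.Line] : Matrix Γ.Point Γ.Point ℝ :=
  Γ.incMatrix * Γ.incMatrix.transpose

/-- The matrix of the relation of being at distance `k` on points. -/
noncomputable def sphereMatrix (Γ : GenHexagon) (k : ℕ) : Matrix Γ.Point Γ.Point ℝ :=
  Γ.distMatrix (Pi.single k 1)

/-- The action of the Gram matrix of a hexagon of order `(s, t)` on functions of the distance. -/
def gramAction (s t : ℕ) (f : ℕ → ℝ) : ℕ → ℝ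
  | 0 => (t + 1) * (f 0 + s * f 2)
  | 2 => f 0 + (s + t) * f 2 + s * t * f 4
  | 4 => f 2 + (s + t) * f 4 + s * t * f 6
  | _ => (t + 1) * (f 4 + s * f 6)

/-- The function of the distance giving the eigenvectors of the Gram matrix for the eigenvalue
`s + t + ε`, where `ε ^ 2 = s * t`: it solves the recurrence `gramAction s t f = (s + t + ε) f`,
normalised so as to be polynomial in `ε`. -/
def zonalFun (t : ℕ) (ε : ℝ) : ℕ → ℝ
  | 0 => (t + 1) * ε ^ 3
  | 2 => ε * (ε ^ 2 + t * ε - t)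
  | 4 => ε ^ 2 - ε - t
  | _ => -(t + 1)

variable {s t : ℕ}

theorem HasOrder.card_filter_pts [Fintype Γ.Point] (hord : Γ.HasOrder s t) (L : Γ.Line)
    [DecidablePred (· ∈ Γ.pts L)] : Finset.card {x | x ∈ Γ.pts L} = s + 1 := by
  rw [← hord.ncard_pts L, ← Set.ncard_coe_finset, Finset.coe_filter_univ]
  rfl

theorem HasOrder.card_filter_lines [Fintype Γ.Line] (hord : Γ.HasOrder s t) (x : Γ.Point)
    [DecidablePred (x ∈ Γ.pts ·)] : Finset.card {L | x ∈ Γ.pts L} = t + 1 := by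
  rw [← hord.ncard_lines x, ← Set.ncard_coe_finset, Finset.coe_filter_univ]

open scoped Classical in
theorem HasOrder.sum_lines_eq_mul [Fintype Γ.Line] (hord : Γ.HasOrder s t) (g : ℕ → ℝ)
    {x y : Γ.Point} {k : ℕ} (hk : ∀ L, x ∈ Γ.pts L → Γ.lineDist y L = k) :
    ∑ L with x ∈ Γ.pts L, g (Γ.lineDist y L) = (t + 1) * g k := by
  rw [Finset.sum_congr rfl fun L hL => by rw [hk L (by simpa using hL)], Finset.sum_const,
    hord.card_filter_lines, nsmul_eq_mul, Nat.cast_succ]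

open scoped Classical in
theorem gramMatrix_mul_apply [Fintype Γ.Point] [Fintype Γ.Line] (M : Matrix Γ.Point Γ.Point ℝ)
    (x y : Γ.Point) :
    (Γ.gramMatrix * M) x y = ∑ L with x ∈ Γ.pts L, ∑ z with z ∈ Γ.pts L, M z y := by
  rw [gramMatrix, Matrix.mul_assoc]
  simp only [Matrix.mul_apply, incMatrix, Matrix.transpose_apply, Matrix.of_apply, ite_mul,
    one_mul, zero_mul, Finset.sum_filter]

namespace IsGenHexagon

open scoped Classical in
theorem sum_pts [Fintype Γ.Point] (hΓ : Γ.IsGenHexagon) (hord : Γ.HasOrder s t) (f : ℕ → ℝ)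
    (y : Γ.Point) (L : Γ.Line) :
    ∑ x with x ∈ Γ.pts L, f (Γ.pointDist x y) =
      f (Γ.lineDist y L - 1) + s * f (Γ.lineDist y L + 1) := by
  obtain ⟨p, hp, hpy⟩ := hΓ.exists_mem_pointDist_add_one_eq y L
  rw [← hpy, Nat.add_sub_cancel, hpy, pointDist_comm y p]
  refine sum_eq_add_mul (hord.card_filter_pts L) (by simpa using hp) fun x hx hxp => ?_
  replace hx : x ∈ Γ.pts L := by simpa using hx
  rw [pointDist_comm, (hΓ.pointDist_of_mem y hx).resolve_right fun h =>
    hxp (hΓ.eq_of_pointDist_add_one_eq hx hp h hpy)]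

open scoped Classical in
theorem sum_lines [Fintype Γ.Line] (hΓ : Γ.IsGenHexagon) (hord : Γ.HasOrder s t) (g : ℕ → ℝ)
    {x y : Γ.Point} (hne : x ≠ y) (hlt : Γ.pointDist x y < 6) :
    ∑ L with x ∈ Γ.pts L, g (Γ.lineDist y L) =
      g (Γ.pointDist x y - 1) + t * g (Γ.pointDist x y + 1) := by
  rw [pointDist_comm] at hlt ⊢
  obtain ⟨M, hM, hMy⟩ := hΓ.exists_mem_lineDist_add_one_eq hne.symm
  rw [← hMy, Nat.add_sub_cancel, hMy]
  refine sum_eq_add_mul (hord.card_filter_lines x) (by simpa using hM) fun L hL hLM => ?_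
  replace hL : x ∈ Γ.pts L := by simpa using hL
  rcases hΓ.pointDist_of_mem y hL with h | h
  · exact absurd (hΓ.eq_of_lineDist_add_one_eq hL hM hlt h.symm hMy) hLM
  · rw [h]

theorem gramMatrix_mul_distMatrix [Fintype Γ.Point] [Fintype Γ.Line] (hΓ : Γ.IsGenHexagon)
    (hord : Γ.HasOrder s t) (f : ℕ → ℝ) :
    Γ.gramMatrix * Γ.distMatrix f = Γ.distMatrix (gramAction s t f) := by
  classical
  ext x y
  simp only [gramMatrix_mul_apply, distMatrix, Matrix.of_apply, hΓ.sum_pts hord]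
  let g : ℕ → ℝ := fun l => f (l - 1) + s * f (l + 1)
  change ∑ L with x ∈ Γ.pts L, g (Γ.lineDist y L) = _
  rcases hΓ.pointDist_cases x y with h | h | h | h
  · obtain rfl := hΓ.pointDist_eq_zero.1 h
    rw [h, hord.sum_lines_eq_mul g fun L hL => lineDist_eq_one.2 hL]
    rfl
  · rw [hΓ.sum_lines hord g (ne_of_pointDist_ne_zero (by omega)) (by omega), h]
    simp only [g, gramAction]
    ring
  · rw [hΓ.sum_lines hord g (ne_of_pointDist_ne_zero (by omega)) (by omega), h]
    simp only [g, gramAction]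
    ring
  · rw [h, hord.sum_lines_eq_mul g (k := 5) fun L hL => ?_]
    · rfl
    · have := hΓ.pointDist_of_mem y hL
      have := hΓ.lineDist_cases y L
      rw [pointDist_comm] at h
      omega

theorem distMatrix_eq_add (hΓ : Γ.IsGenHexagon) (f : ℕ → ℝ) :
    Γ.distMatrix f = f 0 • Γ.sphereMatrix 0 + f 2 • Γ.sphereMatrix 2 + f 4 • Γ.sphereMatrix 4 +
      f 6 • Γ.sphereMatrix 6 := by
  ext x y
  rcases hΓ.pointDist_cases x y with h | h | h | h <;> simp [sphereMatrix, distMatrix, h]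

theorem sphereMatrix_zero [DecidableEq Γ.Point] (hΓ : Γ.IsGenHexagon) : Γ.sphereMatrix 0 = 1 := by
  ext x y
  simp only [sphereMatrix, distMatrix, Matrix.of_apply, Pi.single_apply, hΓ.pointDist_eq_zero,
    Matrix.one_apply]

theorem gramMatrix_mul_sphereMatrix [Fintype Γ.Point] [Fintype Γ.Line] (hΓ : Γ.IsGenHexagon)
    (hord : Γ.HasOrder s t) :
    Γ.gramMatrix * Γ.sphereMatrix 0 = (t + 1 : ℝ) • Γ.sphereMatrix 0 + Γ.sphereMatrix 2 ∧
    Γ.gramMatrix * Γ.sphereMatrix 2 = (s * (t + 1) : ℝ) • Γ.sphereMatrix 0 +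
      (s + t : ℝ) • Γ.sphereMatrix 2 + Γ.sphereMatrix 4 ∧
    Γ.gramMatrix * Γ.sphereMatrix 4 = (s * t : ℝ) • Γ.sphereMatrix 2 +
      (s + t : ℝ) • Γ.sphereMatrix 4 + (t + 1 : ℝ) • Γ.sphereMatrix 6 := by
  refine ⟨?_, ?_, ?_⟩ <;>
    rw [sphereMatrix, hΓ.gramMatrix_mul_distMatrix hord, hΓ.distMatrix_eq_add, ← sphereMatrix] <;>
    simp [gramAction, mul_comm]

-- `p₂`, `p₄` and `p₆` are the eigenvalues of the sphere matrices on the columns of `M`; the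
-- hypotheses on them are `gramMatrix_mul_sphereMatrix` read on these columns.
theorem distMatrix_mul_eq_smul [Fintype Γ.Point] [Fintype Γ.Line] (hΓ : Γ.IsGenHexagon)
    (hord : Γ.HasOrder s t) {M : Matrix Γ.Point Γ.Point ℝ} {θ p₂ p₄ p₆ : ℝ}
    (hM : Γ.gramMatrix * M = θ • M) (h0 : θ = t + 1 + p₂)
    (h2 : θ * p₂ = s * (t + 1) + (s + t) * p₂ + p₄)
    (h4 : θ * p₄ = s * t * p₂ + (s + t) * p₄ + (t + 1) * p₆) (f : ℕ → ℝ) :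
    Γ.distMatrix f * M = (f 0 + f 2 * p₂ + f 4 * p₄ + f 6 * p₆) • M := by
  classical
  obtain ⟨hR0, hR2, hR4⟩ := hΓ.gramMatrix_mul_sphereMatrix hord
  have gramMatrix_mul {A : Matrix Γ.Point Γ.Point ℝ} {p : ℝ} (hA : A * M = p • M) :
      Γ.gramMatrix * A * M = (θ * p) • M := by
    rw [Matrix.mul_assoc, hA, Matrix.mul_smul, hM, smul_smul, mul_comm]
  have hA0 : Γ.sphereMatrix 0 * M = (1 : ℝ) • M := by
    rw [hΓ.sphereMatrix_zero, Matrix.one_mul, one_smul]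
  have hA2 : Γ.sphereMatrix 2 * M = p₂ • M := by
    have h := gramMatrix_mul hA0
    rw [hR0, Matrix.add_mul, Matrix.smul_mul, hA0, h0] at h
    linear_combination (norm := module) h
  have hA4 : Γ.sphereMatrix 4 * M = p₄ • M := by
    have h := gramMatrix_mul hA2
    rw [hR2, Matrix.add_mul, Matrix.add_mul, Matrix.smul_mul, Matrix.smul_mul, hA0, hA2, h2] at h
    linear_combination (norm := module) h
  have hA6 : Γ.sphereMatrix 6 * M = p₆ • M := by
    have h := gramMatrix_mul hA4
    rw [hR4, Matrix.add_mul, Matrix.add_mul, Matrix.smul_mul, Matrix.smul_mul, Matrix.smul_mul,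
      hA2, hA4, h4] at h
    have ht : (t + 1 : ℝ) ≠ 0 := by positivity
    refine smul_right_injective _ ht ?_
    linear_combination (norm := module) h
  rw [hΓ.distMatrix_eq_add]
  simp only [Matrix.add_mul, Matrix.smul_mul, hA0, hA2, hA4, hA6]
  module

theorem card_point [Fintype Γ.Point] [Nonempty Γ.Point] (hΓ : Γ.IsGenHexagon)
    (hord : Γ.HasOrder s t) :
    (Fintype.card Γ.Point : ℝ) = (1 + s) * (1 + s * t + (s * t) ^ 2) := by
  have := hΓ.finite_line hord
  have := Fintype.ofFinite Γ.Line
  have hR : Γ.gramMatrix * Γ.distMatrix 1 = ((s + 1) * (t + 1) : ℝ) • Γ.distMatrix 1 := by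
    rw [hΓ.gramMatrix_mul_distMatrix hord]
    ext x y
    rcases hΓ.pointDist_cases x y with h | h | h | h <;>
      simp only [distMatrix, gramAction, Matrix.of_apply, Matrix.smul_apply, smul_eq_mul,
        Pi.one_apply, h] <;>
      ring
  have h := hΓ.distMatrix_mul_eq_smul hord (p₂ := s * (t + 1)) (p₄ := s ^ 2 * t * (t + 1))
    (p₆ := s ^ 3 * t ^ 2) hR (by ring) (by ring) (by ring) 1
  obtain ⟨x⟩ := ‹Nonempty Γ.Point›
  have hx := congr_fun₂ h x x
  simp only [distMatrix, Matrix.mul_apply, Matrix.smul_apply, Matrix.of_apply, Pi.one_apply,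
    mul_one, one_mul, Finset.sum_const, Finset.card_univ, nsmul_eq_mul, smul_eq_mul] at hx
  linear_combination hx

theorem gramMatrix_mul_distMatrix_zonalFun [Fintype Γ.Point] [Fintype Γ.Line]
    (hΓ : Γ.IsGenHexagon) (hord : Γ.HasOrder s t) {ε : ℝ} (hε : ε ^ 2 = s * t) :
    Γ.gramMatrix * Γ.distMatrix (zonalFun t ε) =
      (s + t + ε) • Γ.distMatrix (zonalFun t ε) := by
  rw [hΓ.gramMatrix_mul_distMatrix hord]
  ext x y
  rcases hΓ.pointDist_cases x y with h | h | h | h <;>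
    simp only [Matrix.smul_apply, smul_eq_mul, distMatrix, Matrix.of_apply, h, gramAction, zonalFun]
  · linear_combination (t + 1 : ℝ) * (ε - ε ^ 2) * hε
  · linear_combination (ε - ε ^ 2 + t) * hε
  · linear_combination (t + 1 : ℝ) * hε
  · linear_combination (t + 1 : ℝ) * hε

theorem distMatrix_zonalFun_mul_self [Fintype Γ.Point] (hΓ : Γ.IsGenHexagon)
    (hord : Γ.HasOrder s t) {ε : ℝ} (hε : ε ^ 2 = s * t) :
    Γ.distMatrix (zonalFun t ε) * Γ.distMatrix (zonalFun t ε) =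
      (2 * ε * (1 + ε ^ 2 - ε) * (s + t + ε)) • Γ.distMatrix (zonalFun t ε) := by
  have := hΓ.finite_line hord
  have := Fintype.ofFinite Γ.Line
  rw [hΓ.distMatrix_mul_eq_smul hord (p₂ := s - 1 + ε) (p₄ := ε * (s - 1) - s) (p₆ := -ε * s)
    (hΓ.gramMatrix_mul_distMatrix_zonalFun hord hε)]
  · simp only [zonalFun]
    congr 1
    linear_combination -(1 + ε ^ 2 - ε) * hε
  · ring
  · linear_combination hε
  · linear_combination (s - 1 : ℝ) * hε

theorem exists_nat_multiplicity [Nonempty Γ.Point] (hΓ : Γ.IsGenHexagon) (hord : Γ.HasOrder s t)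
    {ε : ℝ} (hε : ε ^ 2 = s * t) (hε0 : ε ≠ 0) (hθ : s + t + ε ≠ 0) :
    ∃ m : ℕ, 2 * m * (s + t + ε) = s * t * (1 + s) * (1 + t) * (1 + s * t + ε) := by
  have := hΓ.finite_point hord
  have := Fintype.ofFinite Γ.Point
  let c := 2 * ε * (1 + ε ^ 2 - ε) * (s + t + ε)
  have hc' : 1 + ε ^ 2 - ε ≠ 0 := by nlinarith [sq_nonneg (ε - 1), sq_nonneg ε]
  have hc : c ≠ 0 := mul_ne_zero (mul_ne_zero (mul_ne_zero two_ne_zero hε0) hc') hθ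
  let E := c⁻¹ • Γ.distMatrix (zonalFun t ε)
  have hE : IsIdempotentElem E := by
    rw [IsIdempotentElem, Matrix.smul_mul, Matrix.mul_smul, hΓ.distMatrix_zonalFun_mul_self hord hε,
      inv_smul_smul₀ hc]
  obtain ⟨m, hm⟩ := exists_nat_trace_eq_of_isIdempotentElem hE
  have htrace : E.trace = c⁻¹ * (Fintype.card Γ.Point * ((t + 1) * ε ^ 3)) := by
    simp only [E, Matrix.trace, Matrix.diag_apply, Matrix.smul_apply, distMatrix, Matrix.of_apply,
      pointDist_self, zonalFun, smul_eq_mul, Finset.sum_const, Finset.card_univ, nsmul_eq_mul]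
    ring
  rw [hm, hΓ.card_point hord, ← hε, eq_inv_mul_iff_mul_eq₀ hc] at htrace
  refine ⟨m, mul_left_cancel₀ (mul_ne_zero hε0 hc') ?_⟩
  rw [← hε]
  linear_combination htrace

theorem exists_int_mul_eq_mul_sqrt [Nonempty Γ.Point] (hΓ : Γ.IsGenHexagon) (hord : Γ.HasOrder s t)
    (hs : 0 < s) (ht : 0 < t) :
    ∃ d : ℤ, d * (s ^ 2 + s * t + t ^ 2) =
      s * t * (s ^ 2 - 1) * (t ^ 2 - 1) * √(s * t) := by
  have hε : √(s * t : ℝ) ^ 2 = s * t := Real.sq_sqrt (by positivity)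
  have hε0 : 0 < √(s * t : ℝ) := by positivity
  have hlt : √(s * t : ℝ) < s + t := Real.sqrt_lt' (by positivity) |>.2 (by nlinarith)
  obtain ⟨m, hm⟩ := hΓ.exists_nat_multiplicity hord hε hε0.ne' (by positivity)
  obtain ⟨m', hm'⟩ := hΓ.exists_nat_multiplicity hord (ε := -√(s * t : ℝ))
    (by rw [neg_sq, hε]) (neg_ne_zero.2 hε0.ne') (by linarith)
  refine ⟨m' - m, ?_⟩
  push_cast
  linear_combination (s + t + √(s * t : ℝ)) / 2 * hm' - (s + t - √(s * t : ℝ)) / 2 * hm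
    + (m' - m) * hε

theorem exists_sq_eq_and_dvd [Nonempty Γ.Point] (hΓ : Γ.IsGenHexagon) (hord : Γ.HasOrder s t)
    (hs : 1 < s) (ht : 1 < t) :
    ∃ n : ℤ, n ^ 2 = s * t ∧
      (s ^ 2 + s * t + t ^ 2 : ℤ) ∣ s * t * (s ^ 2 - 1) * (t ^ 2 - 1) * n := by
  obtain ⟨d, hd⟩ := hΓ.exists_int_mul_eq_mul_sqrt hord (by omega) (by omega)
  have hsq : (d * (s ^ 2 + s * t + t ^ 2)) ^ 2 =
      (s * t * (s ^ 2 - 1) * (t ^ 2 - 1)) ^ 2 * (s * t : ℤ) := by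
    have h := congrArg (· ^ 2) hd
    simp only [mul_pow _ (√(s * t : ℝ)), Real.sq_sqrt (by positivity : (0 : ℝ) ≤ s * t)] at h
    exact_mod_cast h
  have hs' : (s ^ 2 - 1 : ℤ) ≠ 0 := by
    have : (1 : ℤ) < s := by exact_mod_cast hs
    nlinarith
  have ht' : (t ^ 2 - 1 : ℤ) ≠ 0 := by
    have : (1 : ℤ) < t := by exact_mod_cast ht
    nlinarith
  have hA : (s * t * (s ^ 2 - 1) * (t ^ 2 - 1) : ℤ) ≠ 0 := by
    refine mul_ne_zero (mul_ne_zero (mul_ne_zero ?_ ?_) hs') ht' <;> exact_mod_cast (by omega)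
  obtain ⟨n, hn⟩ := (Int.pow_dvd_pow_iff two_ne_zero).1 (Dvd.intro _ hsq.symm)
  have hn2 : n ^ 2 = s * t := by
    rw [hn, mul_pow] at hsq
    exact mul_left_cancel₀ (pow_ne_zero 2 hA) hsq
  exact ⟨n, hn2, d, by rw [← hn]; ring⟩

theorem ne_add_one_mul [Nonempty Γ.Point] (hΓ : Γ.IsGenHexagon)
    (hord : Γ.HasOrder s t) (ht : 1 < t) : s ≠ (t + 1) * t := by
  intro hst
  obtain ⟨n, hn, hdvd⟩ := hΓ.exists_sq_eq_and_dvd hord (by nlinarith) ht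
  exact not_sq_add_mul_add_sq_dvd (by exact_mod_cast ht) (by exact_mod_cast hst) hn hdvd

end IsGenHexagon

end GenHexagon

/-- Claim 5 in the proof: if the points of `S` are pairwise special, then `s = t` and
`S` is a hyperbolic line. -/
theorem claim5_pairwise_special (Γ : GenHexagon) (hΓ : Γ.IsGenHexagon)
    (s t : ℕ) (hs : 1 < s) (ht : 1 < t) (hord : Γ.HasOrder s t)
    (S : Set Γ.Point) (hS : S.encard = s + 1)
    (hblock : ¬ ∃ y : Γ.Point, ∀ x ∈ S, Γ.Opposite y x)
    (hps : ∀ x ∈ S, ∀ y ∈ S, x ≠ y → Γ.Special x y) :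
    s = t ∧ Γ.IsHyperbolicLine S := by
  have h : GenHexagon.IsSpecialBlockingSet Γ s t S := ⟨hΓ, hord, hS, hblock, hps⟩
  have ht0 : 0 < t := by omega
  obtain ⟨x, hx, y, hy, hxy⟩ := (Set.one_lt_ncard h.finite).1 (by rw [h.ncard_eq]; omega)
  obtain ⟨a, hxa, hya⟩ := hΓ.exists_pointDist_eq_two (h.pointDist_eq_four hx hy hxy)
  have ha : {u ∈ S | Γ.pointDist u a = 2}.Nontrivial := ⟨x, ⟨hx, hxa⟩, y, ⟨hy, hya⟩, hxy⟩
  have hSa : ∀ u ∈ S, Γ.pointDist u a = 2 := by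
    by_contra! hz
    obtain ⟨z, hz, hza⟩ := hz
    have : Nonempty Γ.Point := ⟨a⟩
    exact hΓ.ne_add_one_mul hord ht (h.eq_mul_of_pointDist_ne_two ht0 ha hz hza)
  have hcard := h.ncard_collinear ht0 ha
  rw [Set.sep_eq_self_iff_mem_true.2 hSa, h.ncard_eq] at hcard
  exact ⟨Nat.succ_injective hcard, h.isHyperbolicLine hSa⟩
end
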